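/- Let −∞ ≤ a < b ≤ ∞ and let f be a continuous real-valued function on (a, b) that admits a continuous extension F to {z ∈ ℂ : Im z > 0} ∪ (a, b) which is analytic on the open upper half-plane {z ∈ ℂ : Im z > 0} and satisfies F(x) = f(x) for all x ∈ (a, b). Then the following are equivalent: (i) f is operator monotone on (a, b), i.e. for all bounded self-adjoint operators A, B on H with spectra contained in (a, b), A ≤ B implies f(A) ≤ f(B); (ii) Im F(z) ≥ 0 for every z ∈ ℂ with Im z > 0. -/

import Mathlib

/-!
The map `z ↦ 2z / (1 + z²)` sends the open unit disc conformally onto the plane slit along the real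
points of absolute value at least `1`, and the upper half disc onto the upper half plane. After an
affine change of variables `S` contains `(-1, 1)`, and by Schwarz reflection `F` pulls back to a
holomorphic function `G` on the disc. For `0 < r < 1` the Poisson formula for `G (r ·)` at a real
point `z`, written in the slit coordinate `x = 2z / (1 + z²)`, reads
`Re G (r z) = const + (1/π) ∫ t in -1..1, W t * (x / (1 - t x))`,
where `W` is the imaginary part of `G` on the upper half of the circle of radius `r`.

If `Im F ≥ 0`, then `W ≥ 0`, and each `x / (1 - t x)` is operator monotone; let `r → 1`. Conversely,
the dilation `z ↦ r z`, read in the slit coordinate, is itself operator monotone, so operator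
monotonicity of `f` passes to the integral; testing it on rank-one perturbations of diagonal
operators forces `W ≥ 0`, that is, `Im G ≥ 0` on every upper half circle.
-/

open ContinuousLinearMap MeasureTheory

variable {H : Type*} [NormedAddCommGroup H] [InnerProductSpace ℂ H] [CompleteSpace H]

open Set Filter Topology

theorem tendstoUniformlyOn_of_continuousOn_uncurry {α β E : Type*} [TopologicalSpace α]
    [TopologicalSpace β] [UniformSpace E] {F : α → β → E} {s : Set α} {k : Set β} {q : α}
    (hk : IsCompact k) (hF : ContinuousOn F.uncurry (s ×ˢ k)) (hq : q ∈ s) :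
    TendstoUniformlyOn F (F q) (𝓝[s] q) k := by
  intro u hu
  obtain ⟨v, hv, hvu⟩ := hk.mem_uniformity_of_prod hF hq (symm_le_uniformity hu)
  filter_upwards [hv] with p hp x hx using hvu p hp x hx

theorem continuousOn_intervalIntegral_of_continuousOn_uncurry {X E : Type*} [TopologicalSpace X]
    [FirstCountableTopology X] [NormedAddCommGroup E] [NormedSpace ℝ E] {F : X → ℝ → E} {s : Set X}
    {a b : ℝ} (hab : a ≤ b) (hF : ContinuousOn F.uncurry (s ×ˢ Icc a b)) :
    ContinuousOn (fun x ↦ ∫ t in a..b, F x t) s := by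
  rw [← uIcc_of_le hab] at hF
  intro x hx
  refine TendstoUniformlyOn.tendsto_intervalIntegral_of_continuousOn ?_
    (tendstoUniformlyOn_of_continuousOn_uncurry isCompact_uIcc hF hx)
  filter_upwards [self_mem_nhdsWithin] with y hy
  exact hF.comp (f := fun t : ℝ ↦ (y, t)) (by fun_prop) fun _ ht ↦ ⟨hy, ht⟩

section OperatorMonotone

variable {𝔸 : Type*} [CStarAlgebra 𝔸] [PartialOrder 𝔸]

/-- A real function `f` is *operator monotone* on `S` over the C⋆-algebra `𝔸` if `A ≤ B` implies
`f(A) ≤ f(B)` for all self-adjoint `A`, `B` in `𝔸` with spectrum in `S`. -/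
def OperatorMonotoneOn (𝔸 : Type*) [CStarAlgebra 𝔸] [PartialOrder 𝔸] (f : ℝ → ℝ) (S : Set ℝ) :
    Prop :=
  ∀ ⦃A B : 𝔸⦄, IsSelfAdjoint A → IsSelfAdjoint B → spectrum ℝ A ⊆ S → spectrum ℝ B ⊆ S →
    A ≤ B → cfc f A ≤ cfc f B

namespace OperatorMonotoneOn

variable {f g : ℝ → ℝ} {S T : Set ℝ}

theorem congr (hf : OperatorMonotoneOn 𝔸 f S) (hfg : EqOn f g S) : OperatorMonotoneOn 𝔸 g S := by
  intro A B hA hB hAS hBS hAB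
  rw [← cfc_congr (hfg.mono hAS), ← cfc_congr (hfg.mono hBS)]
  exact hf hA hB hAS hBS hAB

theorem comp (hg : OperatorMonotoneOn 𝔸 g T) (hf : OperatorMonotoneOn 𝔸 f S)
    (hgc : ContinuousOn g T) (hfc : ContinuousOn f S) (hST : MapsTo f S T) :
    OperatorMonotoneOn 𝔸 (g ∘ f) S := by
  have spectrum_subset {A : 𝔸} (hA : IsSelfAdjoint A) (hAS : spectrum ℝ A ⊆ S) :
      spectrum ℝ (cfc f A) ⊆ T := by
    rw [cfc_map_spectrum f A hA (hfc.mono hAS)]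
    exact (hST.mono_left hAS).image_subset
  have cfc_comp_eq {A : 𝔸} (hA : IsSelfAdjoint A) (hAS : spectrum ℝ A ⊆ S) :
      cfc (g ∘ f) A = cfc g (cfc f A) :=
    cfc_comp g f A hA (hgc.mono (hST.mono_left hAS).image_subset) (hfc.mono hAS)
  intro A B hA hB hAS hBS hAB
  rw [cfc_comp_eq hA hAS, cfc_comp_eq hB hBS]
  exact hg (cfc_predicate f A) (cfc_predicate f B) (spectrum_subset hA hAS)
    (spectrum_subset hB hBS) (hf hA hB hAS hBS hAB)

theorem of_tendstoUniformlyOn [OrderClosedTopology 𝔸] {ι : Type*} {l : Filter ι} [l.NeBot]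
    {F : ι → ℝ → ℝ} (hF : ∀ᶠ i in l, OperatorMonotoneOn 𝔸 (F i) S)
    (hFc : ∀ᶠ i in l, ContinuousOn (F i) S)
    (hlim : ∀ K ⊆ S, IsCompact K → TendstoUniformlyOn F f l K) : OperatorMonotoneOn 𝔸 f S := by
  have tendsto_cfc {A : 𝔸} (hAS : spectrum ℝ A ⊆ S) :
      Tendsto (fun i ↦ cfc (F i) A) l (𝓝 (cfc f A)) :=
    tendsto_cfc_fun (hlim _ hAS (spectrum.isCompact (𝕜 := ℝ) A))
      (hFc.mono fun _ hi ↦ hi.mono hAS)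
  intro A B hA hB hAS hBS hAB
  exact le_of_tendsto_of_tendsto (tendsto_cfc hAS) (tendsto_cfc hBS)
    (hF.mono fun _ hi ↦ hi hA hB hAS hBS hAB)

variable [StarOrderedRing 𝔸]

theorem const_add_mul (c : ℝ) {ρ : ℝ} (hρ : 0 ≤ ρ) (S : Set ℝ) :
    OperatorMonotoneOn 𝔸 (fun x ↦ c + ρ * x) S := by
  have cfc_eq {A : 𝔸} (hA : IsSelfAdjoint A) :
      cfc (fun x : ℝ ↦ c + ρ * x) A = algebraMap ℝ 𝔸 c + ρ • A := by
    rw [cfc_const_add c (fun x ↦ ρ * x) A, cfc_const_mul_id ρ A]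
  intro A B hA hB _ _ hAB
  rw [cfc_eq hA, cfc_eq hB]
  gcongr

theorem comp_const_add_mul (hf : OperatorMonotoneOn 𝔸 f T) (hfc : ContinuousOn f T) (c : ℝ) {ρ : ℝ}
    (hρ : 0 ≤ ρ) (hST : MapsTo (fun x ↦ c + ρ * x) S T) :
    OperatorMonotoneOn 𝔸 (fun x ↦ f (c + ρ * x)) S :=
  hf.comp (const_add_mul c hρ S) hfc (by fun_prop) hST

theorem affine (hf : OperatorMonotoneOn 𝔸 f S) (hfc : ContinuousOn f S) (c : ℝ) {ρ : ℝ}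
    (hρ : 0 ≤ ρ) : OperatorMonotoneOn 𝔸 (fun x ↦ c + ρ * f x) S :=
  (const_add_mul c hρ univ).comp hf (by fun_prop) hfc (mapsTo_univ _ _)

end OperatorMonotoneOn

end OperatorMonotone

section FredholmResolvent

variable {𝔸 : Type*} [CStarAlgebra 𝔸] {A B : 𝔸} {t : ℝ}

theorem norm_lt_one_iff_spectrum_subset_Ioo (hA : IsSelfAdjoint A) :
    ‖A‖ < 1 ↔ spectrum ℝ A ⊆ Ioo (-1) 1 := by
  have h := norm_cfc_lt_iff (𝕜 := ℝ) id A one_pos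
  rw [cfc_id ℝ A] at h
  simp only [h, id, Real.norm_eq_abs, abs_lt]
  rfl

/-- The Fredholm resolvent `(1 - t A)⁻¹` of `A`, used for `|t| ≤ 1` and `‖A‖ < 1`; the value is `0`
when `1 - t A` is not invertible. -/
noncomputable def fredholmResolvent (A : 𝔸) (t : ℝ) : 𝔸 := Ring.inverse (1 - t • A)

theorem isUnit_one_sub_smul (hA : ‖A‖ < 1) (ht : t ∈ Icc (-1) 1) : IsUnit (1 - t • A) := by
  refine isUnit_one_sub_of_norm_lt_one ?_
  calc ‖t • A‖ ≤ |t| * ‖A‖ := (norm_smul t A).le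
    _ ≤ 1 * ‖A‖ := by gcongr; exact abs_le.2 ht
    _ < 1 := by rwa [one_mul]

theorem isSelfAdjoint_fredholmResolvent (hA : IsSelfAdjoint A) (t : ℝ) :
    IsSelfAdjoint (fredholmResolvent A t) :=
  ((IsSelfAdjoint.one 𝔸).sub ((IsSelfAdjoint.all t).smul hA)).ringInverse

theorem commute_fredholmResolvent (hA : ‖A‖ < 1) (ht : t ∈ Icc (-1) 1) :
    Commute A (fredholmResolvent A t) := by
  obtain ⟨u, hu⟩ := isUnit_one_sub_smul hA ht
  have h : Commute A u := by
    rw [hu]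
    exact (Commute.one_right A).sub_right ((Commute.refl A).smul_right t)
  rw [fredholmResolvent, ← hu, Ring.inverse_unit]
  exact h.units_inv_right

theorem one_sub_smul_mul_fredholmResolvent (hA : ‖A‖ < 1) (ht : t ∈ Icc (-1) 1) :
    (1 - t • A) * fredholmResolvent A t = 1 :=
  Ring.mul_inverse_cancel _ (isUnit_one_sub_smul hA ht)

theorem fredholmResolvent_mul_one_sub_smul (hA : ‖A‖ < 1) (ht : t ∈ Icc (-1) 1) :
    fredholmResolvent A t * (1 - t • A) = 1 :=
  Ring.inverse_mul_cancel _ (isUnit_one_sub_smul hA ht)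

theorem fredholmResolvent_sub (hA : ‖A‖ < 1) (hB : ‖B‖ < 1) (ht : t ∈ Icc (-1) 1) :
    fredholmResolvent B t - fredholmResolvent A t =
      t • (fredholmResolvent B t * (B - A) * fredholmResolvent A t) := by
  calc fredholmResolvent B t - fredholmResolvent A t
      = fredholmResolvent B t * ((1 - t • A) * fredholmResolvent A t)
          - fredholmResolvent B t * (1 - t • B) * fredholmResolvent A t := by
        rw [one_sub_smul_mul_fredholmResolvent hA ht, fredholmResolvent_mul_one_sub_smul hB ht,
          mul_one, one_mul]
    _ = t • (fredholmResolvent B t * (B - A) * fredholmResolvent A t) := by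
        simp only [mul_sub, sub_mul, mul_one, one_mul, mul_smul_comm, smul_mul_assoc, smul_sub,
          mul_assoc]
        abel

theorem mul_fredholmResolvent_sub (hA : ‖A‖ < 1) (hB : ‖B‖ < 1) (ht : t ∈ Icc (-1) 1) :
    B * fredholmResolvent B t - A * fredholmResolvent A t =
      fredholmResolvent B t * (B - A) * fredholmResolvent A t := by
  calc B * fredholmResolvent B t - A * fredholmResolvent A t
      = fredholmResolvent B t * B * ((1 - t • A) * fredholmResolvent A t)
          - fredholmResolvent B t * (1 - t • B) * A * fredholmResolvent A t := by
        rw [one_sub_smul_mul_fredholmResolvent hA ht, fredholmResolvent_mul_one_sub_smul hB ht,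
          mul_one, one_mul, (commute_fredholmResolvent hB ht).eq]
    _ = fredholmResolvent B t * (B - A) * fredholmResolvent A t := by
        simp only [mul_sub, sub_mul, mul_one, one_mul, mul_smul_comm, smul_mul_assoc, mul_assoc]
        abel

theorem one_sub_mul_pos {x : ℝ} (ht : t ∈ Icc (-1) 1) (hx : x ∈ Ioo (-1) 1) : 0 < 1 - t * x := by
  have h : |t * x| < 1 := by
    calc |t * x| = |t| * |x| := abs_mul t x
      _ ≤ 1 * |x| := by gcongr; exact abs_le.2 ht
      _ < 1 := by rw [one_mul]; exact abs_lt.2 hx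
  linarith [(abs_lt.1 h).2]

theorem cfc_inv_one_sub_mul (hA : IsSelfAdjoint A) (hA1 : ‖A‖ < 1) (ht : t ∈ Icc (-1) 1) :
    cfc (fun x : ℝ ↦ (1 - t * x)⁻¹) A = fredholmResolvent A t := by
  have hspec := (norm_lt_one_iff_spectrum_subset_Ioo hA).1 hA1
  rw [cfc_inv (fun x : ℝ ↦ 1 - t * x) A (fun x hx ↦ (one_sub_mul_pos ht (hspec hx)).ne'),
    cfc_sub (fun _ : ℝ ↦ (1 : ℝ)) (fun x ↦ t * x) A, cfc_const_one ℝ A, cfc_const_mul_id t A,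
    fredholmResolvent]

theorem continuousOn_inv_one_sub_mul (ht : t ∈ Icc (-1) 1) :
    ContinuousOn (fun x : ℝ ↦ (1 - t * x)⁻¹) (Ioo (-1) 1) :=
  ContinuousOn.inv₀ (by fun_prop) fun _ hx ↦ (one_sub_mul_pos ht hx).ne'

theorem cfc_div_one_sub_mul (hA : IsSelfAdjoint A) (hA1 : ‖A‖ < 1) (ht : t ∈ Icc (-1) 1) :
    cfc (fun x : ℝ ↦ x / (1 - t * x)) A = A * fredholmResolvent A t := by
  have hspec := (norm_lt_one_iff_spectrum_subset_Ioo hA).1 hA1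
  simp only [div_eq_mul_inv]
  rw [cfc_mul (fun x : ℝ ↦ x) _ A (by fun_prop) ((continuousOn_inv_one_sub_mul ht).mono hspec),
    cfc_id' ℝ A, cfc_inv_one_sub_mul hA hA1 ht]

variable [PartialOrder 𝔸] [StarOrderedRing 𝔸]

theorem fredholmResolvent_nonneg (hA : IsSelfAdjoint A) (hA1 : ‖A‖ < 1) (ht : t ∈ Icc (-1) 1) :
    0 ≤ fredholmResolvent A t := by
  rw [← cfc_inv_one_sub_mul hA hA1 ht]
  exact cfc_nonneg fun x hx ↦
    (inv_pos.2 (one_sub_mul_pos ht ((norm_lt_one_iff_spectrum_subset_Ioo hA).1 hA1 hx))).le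

theorem mul_fredholmResolvent_mono (hA : IsSelfAdjoint A) (hB : IsSelfAdjoint B) (hA1 : ‖A‖ < 1)
    (hB1 : ‖B‖ < 1) (hAB : A ≤ B) (ht : t ∈ Icc (-1) 1) :
    A * fredholmResolvent A t ≤ B * fredholmResolvent B t := by
  have conj_nonneg {X Y : 𝔸} (hX : IsSelfAdjoint X) (hY : 0 ≤ Y) : 0 ≤ X * Y * X := by
    simpa only [hX.star_eq] using star_left_conjugate_nonneg hY X
  have hsub := fredholmResolvent_sub hB1 hA1 ht
  have hRA := isSelfAdjoint_fredholmResolvent hA t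
  have hRB := isSelfAdjoint_fredholmResolvent hB t
  have hRA0 := fredholmResolvent_nonneg hA hA1 ht
  have hRB0 := fredholmResolvent_nonneg hB hB1 ht
  have hD : 0 ≤ B - A := sub_nonneg.2 hAB
  have hDsa : IsSelfAdjoint (B - A) := hB.sub hA
  rw [← sub_nonneg, mul_fredholmResolvent_sub hA1 hB1 ht]
  rw [← neg_sub B A] at hsub
  -- By the resolvent identity `R' D R` is a congruence of a nonnegative element; the sign of `t`
  -- decides whether `R'` or `R` has to be expanded.
  generalize B - A = D, fredholmResolvent A t = R, fredholmResolvent B t = R' at *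
  rcases le_total 0 t with ht0 | ht0
  · have key : R' * D * R = R * (D + t • (D * R' * D)) * R := by
      have hR' : R' = R + t • (R * D * R') := by
        rw [← sub_eq_iff_eq_add', ← neg_sub, hsub]
        simp only [mul_neg, neg_mul, smul_neg, neg_neg]
      nth_rewrite 1 [hR']
      simp only [mul_add, add_mul, mul_smul_comm, smul_mul_assoc, mul_assoc]
    rw [key]
    exact conj_nonneg hRA (add_nonneg hD (smul_nonneg ht0 (conj_nonneg hDsa hRB0)))
  · have key : R' * D * R = R' * (D + -t • (D * R * D)) * R' := by
      have hR : R = R' + -t • (R * D * R') := by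
        rw [← sub_eq_iff_eq_add', hsub]
        simp only [mul_neg, neg_mul, smul_neg, neg_smul]
      nth_rewrite 1 [hR]
      simp only [mul_add, add_mul, mul_smul_comm, smul_mul_assoc, mul_assoc]
    rw [key]
    exact conj_nonneg hRB (add_nonneg hD
      (smul_nonneg (neg_nonneg.2 ht0) (conj_nonneg hDsa hRA0)))

end FredholmResolvent

section PickTransform

variable {𝔸 : Type*} [CStarAlgebra 𝔸] {A B : 𝔸} {t : ℝ} {W : ℝ → ℝ}

theorem continuousOn_uncurry_fredholmResolvent :
    ContinuousOn (fun p : 𝔸 × ℝ ↦ fredholmResolvent p.1 p.2) (Metric.ball 0 1 ×ˢ Icc (-1) 1) := by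
  rintro ⟨A, t⟩ ⟨hA, ht⟩
  obtain ⟨u, hu⟩ := isUnit_one_sub_smul (mem_ball_zero_iff.1 hA) ht
  have h : ContinuousAt Ring.inverse (1 - t • A) := hu ▸ NormedRing.inverse_continuousAt u
  exact (ContinuousAt.comp (f := fun p : 𝔸 × ℝ ↦ 1 - p.2 • p.1) h
    (by fun_prop)).continuousWithinAt

theorem continuousOn_fredholmResolvent (hA : ‖A‖ < 1) :
    ContinuousOn (fredholmResolvent A) (Icc (-1) 1) :=
  continuousOn_uncurry_fredholmResolvent.comp (f := fun t : ℝ ↦ (A, t)) (by fun_prop)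
    fun _ ht ↦ ⟨mem_ball_zero_iff.2 hA, ht⟩

/-- The *Pick transform* `x ↦ ∫₋₁¹ W(t) x / (1 - t x) dt` of a weight `W` on `[-1, 1]`, a function
on `(-1, 1)`; nonnegative weights yield operator monotone functions. -/
noncomputable def pickTransform (W : ℝ → ℝ) (x : ℝ) : ℝ :=
  ∫ t in (-1 : ℝ)..1, W t * (x / (1 - t * x))

theorem continuousOn_pickTransform_integrand (hW : ContinuousOn W (Icc (-1) 1)) :
    ContinuousOn (fun p : ℝ × ℝ ↦ W p.1 * (p.2 / (1 - p.1 * p.2)))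
      (Icc (-1) 1 ×ˢ Ioo (-1) 1) :=
  (hW.comp continuousOn_fst fun _ hp ↦ hp.1).mul
    (ContinuousOn.div (by fun_prop) (by fun_prop) fun _ hp ↦ (one_sub_mul_pos hp.1 hp.2).ne')

theorem continuousOn_pickTransform (hW : ContinuousOn W (Icc (-1) 1)) :
    ContinuousOn (pickTransform W) (Ioo (-1) 1) :=
  continuousOn_intervalIntegral_of_continuousOn_uncurry (by norm_num)
    ((continuousOn_pickTransform_integrand hW).comp continuous_swap.continuousOn
      fun _ hp ↦ ⟨hp.2, hp.1⟩)

theorem cfc_pickTransform (hW : ContinuousOn W (Icc (-1) 1)) (hA : IsSelfAdjoint A)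
    (hA1 : ‖A‖ < 1) :
    cfc (pickTransform W) A = ∫ t in (-1 : ℝ)..1, W t • (A * fredholmResolvent A t) := by
  have hspec := (norm_lt_one_iff_spectrum_subset_Ioo hA).1 hA1
  have hc : ContinuousOn (Function.uncurry fun t x : ℝ ↦ W t * (x / (1 - t * x)))
      (Icc (-1) 1 ×ˢ spectrum ℝ A) :=
    (continuousOn_pickTransform_integrand hW).mono (prod_mono_right hspec)
  obtain ⟨C, hC⟩ :=
    (isCompact_Icc.prod (spectrum.isCompact (𝕜 := ℝ) A)).exists_bound_of_continuousOn hc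
  have cfc_integrand {t : ℝ} (ht : t ∈ Icc (-1) 1) :
      cfc (fun x : ℝ ↦ W t * (x / (1 - t * x))) A = W t • (A * fredholmResolvent A t) := by
    have hcont : ContinuousOn (fun x : ℝ ↦ x / (1 - t * x)) (spectrum ℝ A) :=
      ContinuousOn.div (by fun_prop) (by fun_prop) fun x hx ↦ (one_sub_mul_pos ht (hspec hx)).ne'
    rw [cfc_const_mul (W t) _ A hcont, cfc_div_one_sub_mul hA hA1 ht]
  have hle : (-1 : ℝ) ≤ 1 := by norm_num
  unfold pickTransform
  simp only [intervalIntegral.integral_of_le hle]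
  rw [cfc_setIntegral measurableSet_Ioc _ (fun _ ↦ C) A
    (hc.mono (prod_mono_left Ioc_subset_Icc_self))
    (ae_restrict_of_forall_mem measurableSet_Ioc fun t ht x hx ↦
      hC (t, x) ⟨Ioc_subset_Icc_self ht, hx⟩) (integrable_const C).2 hA]
  exact setIntegral_congr_fun measurableSet_Ioc fun t ht ↦ cfc_integrand (Ioc_subset_Icc_self ht)

theorem continuousOn_smul_mul_fredholmResolvent (hW : ContinuousOn W (Icc (-1) 1))
    (hA1 : ‖A‖ < 1) : ContinuousOn (fun t ↦ W t • (A * fredholmResolvent A t)) (Icc (-1) 1) :=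
  hW.smul (continuousOn_const.mul (continuousOn_fredholmResolvent hA1))

theorem cfc_pickTransform_sub (hW : ContinuousOn W (Icc (-1) 1)) (hA : IsSelfAdjoint A)
    (hB : IsSelfAdjoint B) (hA1 : ‖A‖ < 1) (hB1 : ‖B‖ < 1) :
    cfc (pickTransform W) B - cfc (pickTransform W) A =
      ∫ t in (-1 : ℝ)..1, W t • (fredholmResolvent B t * (B - A) * fredholmResolvent A t) := by
  have hle : (-1 : ℝ) ≤ 1 := by norm_num
  rw [cfc_pickTransform hW hA hA1, cfc_pickTransform hW hB hB1, ← intervalIntegral.integral_sub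
    ((continuousOn_smul_mul_fredholmResolvent hW hB1).intervalIntegrable_of_Icc hle)
    ((continuousOn_smul_mul_fredholmResolvent hW hA1).intervalIntegrable_of_Icc hle)]
  refine intervalIntegral.integral_congr fun t ht ↦ ?_
  rw [uIcc_of_le hle] at ht
  simp only [← smul_sub, mul_fredholmResolvent_sub hA1 hB1 ht]

variable [PartialOrder 𝔸] [StarOrderedRing 𝔸]

theorem operatorMonotoneOn_pickTransform (hW : ContinuousOn W (Icc (-1) 1))
    (hW0 : ∀ t ∈ Icc (-1) 1, 0 ≤ W t) : OperatorMonotoneOn 𝔸 (pickTransform W) (Ioo (-1) 1) := by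
  intro A B hA hB hAS hBS hAB
  rw [← norm_lt_one_iff_spectrum_subset_Ioo hA] at hAS
  rw [← norm_lt_one_iff_spectrum_subset_Ioo hB] at hBS
  have hle : (-1 : ℝ) ≤ 1 := by norm_num
  have integrable {X : 𝔸} (hX : ‖X‖ < 1) :=
    ((continuousOn_smul_mul_fredholmResolvent hW hX).integrableOn_Icc (μ := volume)).mono_set
      Ioc_subset_Icc_self
  rw [cfc_pickTransform hW hA hAS, cfc_pickTransform hW hB hBS,
    intervalIntegral.integral_of_le hle, intervalIntegral.integral_of_le hle]
  refine setIntegral_mono_on (integrable hAS) (integrable hBS) measurableSet_Ioc fun t ht ↦ ?_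
  have ht' := Ioc_subset_Icc_self ht
  exact smul_le_smul_of_nonneg_left (mul_fredholmResolvent_mono hA hB hAS hBS hAB ht') (hW0 t ht')

theorem OperatorMonotoneOn.integral_fredholmResolvent_conj_nonneg
    (hf : OperatorMonotoneOn 𝔸 (pickTransform W) (Ioo (-1) 1)) (hW : ContinuousOn W (Icc (-1) 1))
    (hA : IsSelfAdjoint A) (hA1 : ‖A‖ < 1) {P : 𝔸} (hP : 0 ≤ P) :
    0 ≤ ∫ t in (-1 : ℝ)..1, W t • (fredholmResolvent A t * P * fredholmResolvent A t) := by
  let K (X : 𝔸) (t : ℝ) : 𝔸 := W t • (fredholmResolvent X t * P * fredholmResolvent A t)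
  have hK : ContinuousOn K.uncurry (Metric.ball 0 1 ×ˢ Icc (-1) 1) :=
    (hW.comp continuousOn_snd fun _ hp ↦ hp.2).smul ((continuousOn_uncurry_fredholmResolvent.mul
      continuousOn_const).mul ((continuousOn_fredholmResolvent hA1).comp continuousOn_snd
        fun _ hp ↦ hp.2))
  have hA1' : Metric.ball (0 : 𝔸) 1 ∈ 𝓝 A :=
    Metric.isOpen_ball.mem_nhds (mem_ball_zero_iff.2 hA1)
  have hlim : Tendsto (fun X ↦ ∫ t in (-1 : ℝ)..1, K X t) (𝓝 A) (𝓝 (∫ t in (-1 : ℝ)..1, K A t)) :=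
    (continuousOn_intervalIntegral_of_continuousOn_uncurry (by norm_num) hK).continuousAt hA1'
  have hpath : Tendsto (fun s : ℝ ↦ A + s • P) (𝓝[>] 0) (𝓝 A) := by
    have : ContinuousAt (fun s : ℝ ↦ A + s • P) 0 := by fun_prop
    simpa using this.tendsto.mono_left nhdsWithin_le_nhds
  refine ge_of_tendsto (hlim.comp hpath) ?_
  filter_upwards [hpath.eventually_mem hA1', self_mem_nhdsWithin]
    with s hs1 hs
  rw [mem_ball_zero_iff] at hs1
  have hsP : 0 ≤ s • P := smul_nonneg (le_of_lt hs) hP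
  have hB : IsSelfAdjoint (A + s • P) := hA.add (.of_nonneg hsP)
  have h := sub_nonneg.2 (hf hA hB ((norm_lt_one_iff_spectrum_subset_Ioo hA).1 hA1)
    ((norm_lt_one_iff_spectrum_subset_Ioo hB).1 hs1) (le_add_of_nonneg_right hsP))
  rw [cfc_pickTransform_sub hW hA hB hA1 hs1] at h
  simp only [add_sub_cancel_left, mul_smul_comm, smul_mul_assoc, smul_comm _ s,
    intervalIntegral.integral_smul] at h
  exact (smul_nonneg_iff_nonneg_of_pos_left hs).1 h

end PickTransform

section CauchyKernel

/-- The Cauchy kernels `t ↦ (1 - t y)⁻¹` on `[-1, 1]`, as a continuous family over `y ∈ (-1, 1)`. -/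
noncomputable def cauchyKernel : C(Ioo (-1 : ℝ) 1, C(Icc (-1 : ℝ) 1, ℝ)) :=
  ContinuousMap.curry ⟨fun p ↦ (1 - p.2 * p.1 : ℝ)⁻¹, Continuous.inv₀ (by fun_prop)
    fun p ↦ (one_sub_mul_pos p.2.2 p.1.2).ne'⟩

theorem cauchyKernel_apply (y : Ioo (-1 : ℝ) 1) (t : Icc (-1 : ℝ) 1) :
    cauchyKernel y t = (1 - t * y : ℝ)⁻¹ := rfl

theorem cauchyKernel_mul {y z : Ioo (-1 : ℝ) 1} (hyz : y ≠ z) :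
    cauchyKernel y * cauchyKernel z =
      (y - z : ℝ)⁻¹ • ((y : ℝ) • cauchyKernel y - (z : ℝ) • cauchyKernel z) := by
  ext t
  have hy := (one_sub_mul_pos t.2 y.2).ne'
  have hz := (one_sub_mul_pos t.2 z.2).ne'
  have hyz' : (y - z : ℝ) ≠ 0 := sub_ne_zero.2 (Subtype.coe_injective.ne hyz)
  simp only [ContinuousMap.mul_apply, ContinuousMap.smul_apply, ContinuousMap.sub_apply,
    cauchyKernel_apply, smul_eq_mul]
  field_simp
  ring

theorem mul_mem_topologicalClosure_span_range_cauchyKernel {f g : C(Icc (-1 : ℝ) 1, ℝ)}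
    (hf : f ∈ (Submodule.span ℝ (range cauchyKernel)).topologicalClosure)
    (hg : g ∈ (Submodule.span ℝ (range cauchyKernel)).topologicalClosure) :
    f * g ∈ (Submodule.span ℝ (range cauchyKernel)).topologicalClosure := by
  set M := (Submodule.span ℝ (range cauchyKernel)).topologicalClosure
  have hM : IsClosed (M : Set C(Icc (-1 : ℝ) 1, ℝ)) := Submodule.isClosed_topologicalClosure _
  have kernel_mem (y) : cauchyKernel y ∈ M :=
    Submodule.le_topologicalClosure _ (Submodule.subset_span (mem_range_self y))
  have kernel_mul_kernel_mem (y z) : cauchyKernel y * cauchyKernel z ∈ M := by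
    have : (𝓝[≠] y).NeBot := (nhdsGT_neBot y).mono (nhdsGT_le_nhdsNE y)
    refine (hM.preimage (f := fun z ↦ cauchyKernel y * cauchyKernel z)
      (by fun_prop)).closure_subset_iff.2 (fun z (hz : z ≠ y) ↦ ?_) (dense_compl_singleton y z)
    rw [mem_preimage, cauchyKernel_mul hz.symm]
    exact M.smul_mem _ (M.sub_mem (M.smul_mem _ (kernel_mem y)) (M.smul_mem _ (kernel_mem z)))
  have le_of_kernel_mem {N : Submodule ℝ C(Icc (-1 : ℝ) 1, ℝ)}
      (hN : IsClosed (N : Set C(Icc (-1 : ℝ) 1, ℝ))) (h : ∀ y, cauchyKernel y ∈ N) : M ≤ N :=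
    Submodule.topologicalClosure_minimal _ (Submodule.span_le.2 (range_subset_iff.2 h)) hN
  have mul_kernel_mem {f} (hf : f ∈ M) (z) : f * cauchyKernel z ∈ M :=
    le_of_kernel_mem (N := M.comap (LinearMap.mulRight ℝ (cauchyKernel z)))
      (hM.preimage (f := (· * cauchyKernel z)) (by fun_prop))
      (fun y ↦ kernel_mul_kernel_mem y z) hf
  exact le_of_kernel_mem (N := M.comap (LinearMap.mulLeft ℝ f))
    (hM.preimage (f := (f * ·)) (by fun_prop)) (fun z ↦ mul_kernel_mem hf z) hg

theorem topologicalClosure_span_range_cauchyKernel :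
    (Submodule.span ℝ (range cauchyKernel)).topologicalClosure = ⊤ := by
  have kernel_mem (y) :
      cauchyKernel y ∈ (Submodule.span ℝ (range cauchyKernel)).topologicalClosure :=
    Submodule.le_topologicalClosure _ (Submodule.subset_span (mem_range_self y))
  have one_mem : 1 ∈ (Submodule.span ℝ (range cauchyKernel)).topologicalClosure := by
    convert kernel_mem ⟨0, by norm_num⟩ using 1
    ext t
    simp [cauchyKernel_apply]
  let 𝒜 : Subalgebra ℝ C(Icc (-1 : ℝ) 1, ℝ) := Submodule.toSubalgebra _ one_mem
    fun _ _ ↦ mul_mem_topologicalClosure_span_range_cauchyKernel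
  have hsep : 𝒜.SeparatesPoints := by
    intro s t hst
    refine ⟨_, ⟨_, kernel_mem ⟨1 / 2, by norm_num⟩, rfl⟩, fun h ↦ hst (Subtype.ext ?_)⟩
    have := inv_injective h
    linarith
  refine eq_top_iff.2 fun f _ ↦ ?_
  have hf : f ∈ 𝒜.topologicalClosure :=
    ContinuousMap.subalgebra_topologicalClosure_eq_top_of_separatesPoints 𝒜 hsep ▸ Algebra.mem_top
  exact (Submodule.isClosed_topologicalClosure _).closure_subset hf

end CauchyKernel

section Diagonal

open InnerProductSpace

section InnerProductSpace

variable {E ι : Type*} [NormedAddCommGroup E] [InnerProductSpace ℂ E] [Fintype ι] {e : ι → E}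

theorem exists_orthonormal_of_not_finiteDimensional (hE : ¬ FiniteDimensional ℂ E) (n : ℕ) :
    ∃ e : Fin n → E, Orthonormal ℂ e := by
  have hrank : (n : Cardinal) ≤ Module.rank ℂ E :=
    Cardinal.natCast_lt_aleph0.le.trans (not_lt.1 (mt Module.rank_lt_aleph0_iff.1 hE))
  obtain ⟨v, hv⟩ := exists_linearIndependent_of_le_rank hrank
  exact ⟨_, gramSchmidtNormed_orthonormal hv⟩

theorem norm_sum_smul_sq_of_orthonormal (he : Orthonormal ℂ e) (c : ι → ℂ) :
    ‖∑ i, c i • e i‖ ^ 2 = ∑ i, ‖c i‖ ^ 2 := by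
  have h := he.inner_sum c c Finset.univ
  rw [inner_self_eq_norm_sq_to_K] at h
  simp only [RCLike.conj_mul] at h
  exact_mod_cast h

/-- The operator with eigenvalues `y i` on the orthonormal family `e i` and `0` on its orthogonal
complement. -/
noncomputable def diagonalOperator (e : ι → E) (y : ι → ℝ) : E →L[ℂ] E :=
  ∑ i, y i • rankOne ℂ (e i) (e i)

theorem diagonalOperator_apply (e : ι → E) (y : ι → ℝ) (x : E) :
    diagonalOperator e y x = ∑ i, (y i * inner ℂ (e i) x : ℂ) • e i := by
  simp [diagonalOperator, mul_smul]

theorem diagonalOperator_apply_self (he : Orthonormal ℂ e) (y : ι → ℝ) (i : ι) :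
    diagonalOperator e y (e i) = y i • e i := by
  classical
  simp [diagonalOperator_apply, orthonormal_iff_ite.1 he]

theorem norm_diagonalOperator_le (he : Orthonormal ℂ e) (y : ι → ℝ) :
    ‖diagonalOperator e y‖ ≤ ‖y‖ := by
  refine ContinuousLinearMap.opNorm_le_bound _ (norm_nonneg y) fun x ↦ ?_
  refine le_of_sq_le_sq ?_ (by positivity)
  calc ‖diagonalOperator e y x‖ ^ 2 = ∑ i, ‖(y i * inner ℂ (e i) x : ℂ)‖ ^ 2 := by
        rw [diagonalOperator_apply, norm_sum_smul_sq_of_orthonormal he]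
    _ ≤ ∑ i, ‖y‖ ^ 2 * ‖inner ℂ (e i) x‖ ^ 2 := by
        gcongr with i
        rw [norm_mul, mul_pow, Complex.norm_real]
        gcongr
        exact norm_le_pi_norm y i
    _ ≤ (‖y‖ * ‖x‖) ^ 2 := by
        rw [← Finset.mul_sum, mul_pow]
        gcongr
        exact he.sum_inner_products_le x

theorem norm_diagonalOperator_lt_one (he : Orthonormal ℂ e) {y : ι → ℝ}
    (hy : ∀ i, y i ∈ Ioo (-1) 1) : ‖diagonalOperator e y‖ < 1 :=
  (norm_diagonalOperator_le he y).trans_lt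
    ((pi_norm_lt_iff one_pos).2 fun i ↦ abs_lt.2 (hy i))

end InnerProductSpace

variable {ι : Type*} [Fintype ι] {e : ι → H}

theorem isSelfAdjoint_diagonalOperator (e : ι → H) (y : ι → ℝ) :
    IsSelfAdjoint (diagonalOperator e y) :=
  isSelfAdjoint_sum _ fun i _ ↦ (IsSelfAdjoint.all (y i)).smul
    (isPositive_rankOne_self (e i)).isSelfAdjoint

theorem fredholmResolvent_diagonalOperator_apply (he : Orthonormal ℂ e) {y : ι → ℝ}
    (hy : ∀ i, y i ∈ Ioo (-1) 1) {t : ℝ} (ht : t ∈ Icc (-1) 1) (i : ι) :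
    fredholmResolvent (diagonalOperator e y) t (e i) = (1 - t * y i)⁻¹ • e i := by
  have hne := (one_sub_mul_pos ht (hy i)).ne'
  have heig : (1 - t • diagonalOperator e y) (e i) = (1 - t * y i) • e i := by
    simp [diagonalOperator_apply_self he, sub_smul, mul_smul]
  have h := congr($(fredholmResolvent_mul_one_sub_smul (norm_diagonalOperator_lt_one he hy) ht)
    (e i))
  rw [mul_def, comp_apply, heig, map_smul_of_tower] at h
  rw [eq_inv_smul_iff₀ hne, h]
  rfl

theorem inner_fredholmResolvent_conj_rankOne (he : Orthonormal ℂ e) {y : ι → ℝ}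
    (hy : ∀ i, y i ∈ Ioo (-1) 1) (c : ι → ℝ) {t : ℝ} (ht : t ∈ Icc (-1) 1) :
    inner ℂ (∑ i, e i) ((fredholmResolvent (diagonalOperator e y) t *
        rankOne ℂ (∑ i, c i • e i) (∑ i, c i • e i) * fredholmResolvent (diagonalOperator e y) t)
          (∑ i, e i)) = ((∑ i, c i * (1 - t * y i)⁻¹) ^ 2 : ℝ) := by
  set R := fredholmResolvent (diagonalOperator e y) t
  set ξ := ∑ i, e i
  set η := ∑ i, c i • e i
  have hR : IsSelfAdjoint R :=
    isSelfAdjoint_fredholmResolvent (isSelfAdjoint_diagonalOperator e y) t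
  have hη : inner ℂ η (R ξ) = ((∑ i, c i * (1 - t * y i)⁻¹ : ℝ) : ℂ) := by
    have hRξ : R ξ = ∑ i, (((1 - t * y i)⁻¹ : ℝ) : ℂ) • e i := by
      simp only [ξ, map_sum, R, fredholmResolvent_diagonalOperator_apply he hy ht, Complex.coe_smul]
    have hη' : η = ∑ i, (c i : ℂ) • e i := by simp only [η, Complex.coe_smul]
    rw [hRξ, hη', he.inner_sum]
    simp
  have hsymm : inner ℂ ξ (R η) = inner ℂ (R ξ) η := (hR.isSymmetric ξ η).symm
  have hη2 : inner ℂ (R ξ) η = ((∑ i, c i * (1 - t * y i)⁻¹ : ℝ) : ℂ) := by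
    rw [← inner_conj_symm, hη, Complex.conj_ofReal]
  simp only [mul_def, comp_apply, rankOne_apply, map_smul, inner_smul_right, hη, hsymm, hη2]
  push_cast
  ring

end Diagonal

section PositiveWeight

open InnerProductSpace

variable {W : ℝ → ℝ}

theorem OperatorMonotoneOn.integral_mul_sum_sq_nonneg {ι : Type*} [Fintype ι] {e : ι → H}
    (hf : OperatorMonotoneOn (H →L[ℂ] H) (pickTransform W) (Ioo (-1) 1))
    (hW : ContinuousOn W (Icc (-1) 1)) (he : Orthonormal ℂ e) {y : ι → ℝ}
    (hy : ∀ i, y i ∈ Ioo (-1) 1) (c : ι → ℝ) :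
    0 ≤ ∫ t in (-1 : ℝ)..1, W t * (∑ i, c i * (1 - t * y i)⁻¹) ^ 2 := by
  set ξ := ∑ i, e i
  set R := fredholmResolvent (diagonalOperator e y)
  set P := rankOne ℂ (∑ i, c i • e i) (∑ i, c i • e i)
  have hA1 := norm_diagonalOperator_lt_one he hy
  let φ : (H →L[ℂ] H) →L[ℝ] ℝ :=
    Complex.reCLM ∘L ((innerSL ℂ ξ) ∘L (ContinuousLinearMap.apply ℂ H ξ)).restrictScalars ℝ
  have hP : 0 ≤ P := (nonneg_iff_isPositive _).2 (isPositive_rankOne_self _)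
  have hRPR := hf.integral_fredholmResolvent_conj_nonneg hW (isSelfAdjoint_diagonalOperator e y)
    hA1 hP
  have hR := continuousOn_fredholmResolvent hA1
  have hcint : IntervalIntegrable (fun t ↦ W t • (R t * P * R t)) volume (-1) 1 :=
    (hW.smul ((hR.mul continuousOn_const).mul hR)).intervalIntegrable_of_Icc (by norm_num)
  calc 0 ≤ φ (∫ t in (-1 : ℝ)..1, W t • (R t * P * R t)) :=
        ((nonneg_iff_isPositive _).1 hRPR).re_inner_nonneg_right ξ
    _ = ∫ t in (-1 : ℝ)..1, φ (W t • (R t * P * R t)) := (φ.intervalIntegral_comp_comm hcint).symm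
    _ = _ := intervalIntegral.integral_congr fun t ht ↦ by
        rw [uIcc_of_le (by norm_num)] at ht
        have h := congr(Complex.re $(inner_fredholmResolvent_conj_rankOne he hy c ht))
        rw [Complex.ofReal_re] at h
        simp only [map_smul, smul_eq_mul, ← h]
        rfl

theorem OperatorMonotoneOn.integral_mul_sq_nonneg (hinf : ¬ FiniteDimensional ℂ H)
    (hf : OperatorMonotoneOn (H →L[ℂ] H) (pickTransform W) (Ioo (-1) 1))
    (hW : ContinuousOn W (Icc (-1) 1)) (g : C(Icc (-1 : ℝ) 1, ℝ)) :
    0 ≤ ∫ t in (-1 : ℝ)..1, W t * IccExtend (by norm_num) g t ^ 2 := by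
  have hle : (-1 : ℝ) ≤ 1 := by norm_num
  let Q (g : C(Icc (-1 : ℝ) 1, ℝ)) : ℝ := ∫ t in (-1 : ℝ)..1, W t * IccExtend hle g t ^ 2
  have hcont : ContinuousOn (Function.uncurry fun (g : C(Icc (-1 : ℝ) 1, ℝ)) t ↦
      W t * IccExtend hle g t ^ 2) (univ ×ˢ Icc (-1) 1) := by
    refine (hW.comp continuousOn_snd fun _ hp ↦ hp.2).mul (ContinuousOn.pow ?_ 2)
    simp only [IccExtend, Function.comp_apply]
    fun_prop
  have hQ : Continuous Q :=
    continuousOn_univ.1 (continuousOn_intervalIntegral_of_continuousOn_uncurry hle hcont)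
  have hspan : ∀ g ∈ Submodule.span ℝ (range cauchyKernel), 0 ≤ Q g := by
    intro g hg
    obtain ⟨c, rfl⟩ := Finsupp.mem_span_range_iff_exists_finsupp.1 hg
    obtain ⟨e, he⟩ := exists_orthonormal_of_not_finiteDimensional hinf c.support.card
    have h := hf.integral_mul_sum_sq_nonneg hW (he.comp _ c.support.equivFin.injective)
      (y := fun y ↦ (y : Ioo (-1 : ℝ) 1)) (fun y ↦ y.1.2) (fun y ↦ c y)
    refine h.trans_eq (intervalIntegral.integral_congr fun t ht ↦ ?_)
    rw [uIcc_of_le hle] at ht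
    rw [Finset.sum_coe_sort c.support fun y ↦ c y * (1 - t * y)⁻¹, IccExtend_of_mem hle _ ht]
    simp [Finsupp.sum, ContinuousMap.sum_apply, cauchyKernel_apply]
  have hg : g ∈ (Submodule.span ℝ (range cauchyKernel)).topologicalClosure := by
    rw [topologicalClosure_span_range_cauchyKernel]
    exact Submodule.mem_top
  exact (isClosed_Ici.preimage hQ).closure_subset_iff.2 hspan hg

theorem OperatorMonotoneOn.weight_nonneg (hinf : ¬ FiniteDimensional ℂ H)
    (hf : OperatorMonotoneOn (H →L[ℂ] H) (pickTransform W) (Ioo (-1) 1))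
    (hW : ContinuousOn W (Icc (-1) 1)) : ∀ t ∈ Icc (-1) 1, 0 ≤ W t := by
  have hle : (-1 : ℝ) ≤ 1 := by norm_num
  by_contra! ⟨t₀, ht₀, hWt₀⟩
  let g : C(Icc (-1 : ℝ) 1, ℝ) := ⟨fun t ↦ √(-W t), hW.domRestrict.neg.sqrt⟩
  have hg {t} (ht : t ∈ Icc (-1) 1) : W t * IccExtend hle g t ^ 2 = -max (-W t) 0 ^ 2 := by
    rw [IccExtend_of_mem hle _ ht]
    change W t * √(-W t) ^ 2 = _
    rcases le_total (W t) 0 with h | h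
    · simp [h, sq]
    · simp [Real.sqrt_eq_zero_of_nonpos, h]
  have hneg : 0 < ∫ t in (-1 : ℝ)..1, max (-W t) 0 ^ 2 :=
    intervalIntegral.integral_pos (by norm_num) ((hW.neg.sup continuousOn_const).pow 2)
      (fun _ _ ↦ sq_nonneg _) ⟨t₀, ht₀, pow_pos (lt_max_of_lt_left (neg_pos.2 hWt₀)) 2⟩
  have hpos := hf.integral_mul_sq_nonneg hinf hW g
  rw [intervalIntegral.integral_congr fun t ht ↦ hg (uIcc_of_le hle ▸ ht),
    intervalIntegral.integral_neg] at hpos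
  linarith

end PositiveWeight

section SlitDisk

/-- The conformal map `z ↦ 2 z / (1 + z²)` of the unit disc onto the doubly slit plane
`ℂ \ ((-∞, -1] ∪ [1, ∞))`; it carries the upper half disc onto the upper half plane. -/
noncomputable def diskToSlit (z : ℂ) : ℂ := 2 * z / (1 + z ^ 2)

/-- The inverse of `diskToSlit` on the real interval `(-1, 1)`. -/
noncomputable def slitToDisk (y : ℝ) : ℝ := y / (1 + √(1 - y ^ 2))

theorem one_add_sq_ne_zero {z : ℂ} (hz : ‖z‖ < 1) : 1 + z ^ 2 ≠ 0 := by
  intro h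
  have : ‖z‖ ^ 2 = 1 := by rw [← norm_pow, eq_neg_of_add_eq_zero_right h, norm_neg, norm_one]
  nlinarith [norm_nonneg z]

theorem differentiableOn_diskToSlit : DifferentiableOn ℂ diskToSlit (Metric.ball 0 1) :=
  DifferentiableOn.div (by fun_prop) (by fun_prop)
    fun _ hz ↦ one_add_sq_ne_zero (mem_ball_zero_iff.1 hz)

theorem diskToSlit_conj (z : ℂ) :
    diskToSlit (starRingEnd ℂ z) = starRingEnd ℂ (diskToSlit z) := by
  simp [diskToSlit, map_div₀, Complex.conj_ofNat]

theorem diskToSlit_ofReal (s : ℝ) : diskToSlit s = (2 * s / (1 + s ^ 2) : ℝ) := by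
  simp [diskToSlit]

theorem two_mul_div_one_add_sq_mem_Ioo {s : ℝ} (hs : s ∈ Ioo (-1) 1) :
    2 * s / (1 + s ^ 2) ∈ Ioo (-1) 1 := by
  have h : 0 < 1 + s ^ 2 := by positivity
  rw [mem_Ioo, lt_div_iff₀ h, div_lt_iff₀ h]
  constructor <;> nlinarith [hs.1, hs.2]

theorem diskToSlit_im (z : ℂ) :
    (diskToSlit z).im = 2 * z.im * (1 - ‖z‖ ^ 2) / Complex.normSq (1 + z ^ 2) := by
  rw [diskToSlit, Complex.div_im, ← Complex.normSq_eq_norm_sq, Complex.normSq_apply z]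
  simp only [Complex.mul_im, Complex.re_ofNat, Complex.im_ofNat, zero_mul, add_zero, sq,
    Complex.add_re, Complex.one_re, Complex.mul_re, sub_zero, Complex.add_im, Complex.one_im,
    zero_add]
  ring

theorem diskToSlit_im_pos {z : ℂ} (hz : ‖z‖ < 1) (hz0 : 0 < z.im) : 0 < (diskToSlit z).im := by
  rw [diskToSlit_im]
  have h1 := Complex.normSq_pos.2 (one_add_sq_ne_zero hz)
  have h2 : 0 < 1 - ‖z‖ ^ 2 := by nlinarith [norm_nonneg z]
  positivity

theorem diskToSlit_im_nonneg {z : ℂ} (hz : ‖z‖ ≤ 1) (hz0 : 0 ≤ z.im) : 0 ≤ (diskToSlit z).im := by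
  rw [diskToSlit_im]
  have h2 : 0 ≤ 1 - ‖z‖ ^ 2 := by nlinarith [norm_nonneg z]
  exact div_nonneg (by positivity) (Complex.normSq_nonneg _)

theorem norm_lt_one_and_im_pos_of_diskToSlit_im_pos {z : ℂ} (hz : ‖z‖ ≤ 1)
    (h : 0 < (diskToSlit z).im) : ‖z‖ < 1 ∧ 0 < z.im := by
  have hz2 : 0 ≤ 1 - ‖z‖ ^ 2 := by nlinarith [norm_nonneg z]
  have hpos : 0 < 2 * z.im * (1 - ‖z‖ ^ 2) := by
    rw [diskToSlit_im] at h
    exact pos_of_mul_pos_left h (inv_nonneg.2 (Complex.normSq_nonneg _))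
  have him := pos_of_mul_pos_left hpos hz2
  have hz3 := pos_of_mul_pos_right hpos him.le
  exact ⟨by nlinarith, by linarith⟩

theorem exists_diskToSlit_eq {w : ℂ} (hw : 0 < w.im) :
    ∃ z : ℂ, ‖z‖ < 1 ∧ 0 < z.im ∧ diskToSlit z = w := by
  have hw0 : w ≠ 0 := fun h ↦ by simp [h] at hw
  obtain ⟨d, hd⟩ : ∃ d : ℂ, d ^ 2 = 1 - w ^ 2 := IsAlgClosed.exists_pow_nat_eq _ two_pos
  have diskToSlit_of_root {z : ℂ} (hz : w * (1 + z ^ 2) = 2 * z) : diskToSlit z = w := by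
    have hne : 1 + z ^ 2 ≠ 0 := fun h ↦ by
      have hz0 : z = 0 := by simpa [h] using hz.symm
      simp [hz0] at h
    rw [diskToSlit, ← hz, mul_div_cancel_right₀ _ hne]
  -- The two roots of `w (1 + z²) = 2 z` are inverse to each other, so one lies in the closed disc.
  obtain ⟨z, hz1, hz⟩ : ∃ z : ℂ, ‖z‖ ≤ 1 ∧ w * (1 + z ^ 2) = 2 * z := by
    have hprod : ‖(1 + d) / w‖ * ‖(1 - d) / w‖ = 1 := by
      have : (1 + d) / w * ((1 - d) / w) = 1 := by
        field_simp
        linear_combination -hd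
      rw [← norm_mul, this, norm_one]
    have hroot₁ : w * (1 + ((1 + d) / w) ^ 2) = 2 * ((1 + d) / w) := by
      field_simp
      linear_combination hd
    have hroot₂ : w * (1 + ((1 - d) / w) ^ 2) = 2 * ((1 - d) / w) := by
      field_simp
      linear_combination hd
    rcases le_or_gt ‖(1 + d) / w‖ 1 with h | h
    · exact ⟨_, h, hroot₁⟩
    · exact ⟨_, by nlinarith [norm_nonneg ((1 - d) / w)], hroot₂⟩
  have hzw := diskToSlit_of_root hz
  obtain ⟨h1, h0⟩ := norm_lt_one_and_im_pos_of_diskToSlit_im_pos hz1 (hzw.symm ▸ hw)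
  exact ⟨z, h1, h0, hzw⟩

theorem continuous_slitToDisk : Continuous slitToDisk :=
  Continuous.div₀ (by fun_prop) (by fun_prop) fun _ ↦ by positivity

theorem slitToDisk_mem_Ioo {y : ℝ} (hy : y ∈ Ioo (-1) 1) : slitToDisk y ∈ Ioo (-1) 1 := by
  have h : (0 : ℝ) < 1 + √(1 - y ^ 2) := by positivity
  rw [slitToDisk, mem_Ioo, lt_div_iff₀ h, div_lt_iff₀ h]
  constructor <;> linarith [hy.1, hy.2, Real.sqrt_nonneg (1 - y ^ 2)]

theorem mul_one_add_slitToDisk_sq {y : ℝ} (hy : y ∈ Ioo (-1) 1) :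
    y * (1 + slitToDisk y ^ 2) = 2 * slitToDisk y := by
  have hs : √(1 - y ^ 2) ^ 2 = 1 - y ^ 2 := Real.sq_sqrt (by nlinarith [hy.1, hy.2])
  rw [slitToDisk]
  field_simp
  linear_combination y * hs

theorem diskToSlit_slitToDisk {y : ℝ} (hy : y ∈ Ioo (-1) 1) : diskToSlit (slitToDisk y) = y := by
  rw [diskToSlit_ofReal, ← mul_one_add_slitToDisk_sq hy, mul_div_cancel_right₀ _ (by positivity)]

theorem slitToDisk_two_mul_div {s : ℝ} (hs : s ∈ Ioo (-1) 1) :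
    slitToDisk (2 * s / (1 + s ^ 2)) = s := by
  have hsqrt : √(1 - (2 * s / (1 + s ^ 2)) ^ 2) = (1 - s ^ 2) / (1 + s ^ 2) := by
    have hs2 : 0 ≤ 1 - s ^ 2 := by nlinarith [hs.1, hs.2]
    rw [Real.sqrt_eq_iff_eq_sq]
    · field_simp
      ring
    · exact sub_nonneg.2 (sq_le_one_iff_abs_le_one _ |>.2
        (abs_lt.2 (two_mul_div_one_add_sq_mem_Ioo hs)).le)
    · positivity
  rw [slitToDisk, hsqrt]
  field_simp
  ring

end SlitDisk

section BoundaryRepresentation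

open Complex ComplexConjugate

variable {u : ℂ → ℂ}

theorem continuousOn_sphere_of_diffContOnCl {c : ℂ} {R : ℝ} (hR : 0 < R)
    (hu : DiffContOnCl ℂ u (Metric.ball c R)) : ContinuousOn u (Metric.sphere c |R|) := by
  rw [abs_of_pos hR]
  refine hu.continuousOn.mono ?_
  rw [closure_ball _ hR.ne']
  exact Metric.sphere_subset_closedBall

theorem circleAverage_herglotzRieszKernel_mul {c w : ℂ} {R : ℝ}
    (hu : DiffContOnCl ℂ u (Metric.ball c R)) (hw : w ∈ Metric.ball c R) :
    Real.circleAverage (fun z ↦ herglotzRieszKernel c w z * u z) c R = 2 * u w - u c := by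
  have hR : 0 < R := dist_nonneg.trans_lt hw
  have huc := continuousOn_sphere_of_diffContOnCl hR hu
  rw [← abs_of_pos hR] at hu hw
  have hne {z} (hz : z ∈ Metric.sphere c |R|) : z - w ≠ 0 :=
    sub_ne_zero.2 (Metric.sphere_disjoint_ball.ne_of_mem hz hw)
  let cauchy (z : ℂ) : ℂ := ((z - c) / (z - w)) • u z
  have hc : CircleIntegrable ((2 : ℂ) • cauchy) c R := ContinuousOn.circleIntegrable' <|
    ((ContinuousOn.div (by fun_prop) (by fun_prop) fun _ ↦ hne).smul huc).const_smul 2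
  have hkernel : EqOn (fun z ↦ herglotzRieszKernel c w z * u z) ((2 : ℂ) • cauchy - u)
      (Metric.sphere c |R|) := by
    intro z hz
    have hzw := hne hz
    simp only [herglotzRieszKernel_def, sub_sub_sub_cancel_right, Pi.sub_apply, Pi.smul_apply,
      cauchy, smul_eq_mul]
    field_simp
    ring
  rw [Real.circleAverage_congr_sphere hkernel, Real.circleAverage_sub hc huc.circleIntegrable',
    Real.circleAverage_smul, hu.circleAverage_smul_div hw, hu.circleAverage, smul_eq_mul]

theorem circleAverage_im_herglotzRieszKernel_mul_im {c w : ℂ} {R : ℝ}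
    (hu : DiffContOnCl ℂ u (Metric.ball c R)) (hw : w ∈ Metric.ball c R) :
    Real.circleAverage (fun z ↦ (herglotzRieszKernel c w z).im * (u z).im) c R =
      (u c).re - (u w).re := by
  have huc := continuousOn_sphere_of_diffContOnCl (dist_nonneg.trans_lt hw) hu
  have hK := continuousOn_herglotzRieszKernel_sphere hw
  let poisson (z : ℂ) : ℂ := (herglotzRieszKernel c w z).re • u z
  let herglotz (z : ℂ) : ℂ := herglotzRieszKernel c w z * u z
  have hp : CircleIntegrable poisson c R :=
    ((continuous_re.comp_continuousOn hK).smul huc).circleIntegrable'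
  have hh : CircleIntegrable herglotz c R := (hK.mul huc).circleIntegrable'
  calc Real.circleAverage (fun z ↦ (herglotzRieszKernel c w z).im * (u z).im) c R
      = Real.circleAverage (reCLM ∘ (poisson - herglotz)) c R := by
        congr 1
        ext z
        simp [poisson, herglotz]
    _ = (u w - (2 * u w - u c)).re := by
        rw [reCLM.circleAverage_comp_comm (hp.sub hh), Real.circleAverage_sub hp hh,
          circleAverage_herglotzRieszKernel_mul hu hw]
        exact congr(reCLM ($(hu.circleAverage_re_herglotzRieszKernel_smul hw) - _))
    _ = (u c).re - (u w).re := by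
        simp only [sub_re, mul_re, re_ofNat, im_ofNat, zero_mul, sub_zero]
        ring

theorem im_herglotzRieszKernel_slitToDisk {y : ℝ} (hy : y ∈ Ioo (-1) 1) (θ : ℝ) :
    (herglotzRieszKernel 0 (slitToDisk y) (circleMap 0 1 θ)).im =
      -(Real.sin θ * (y / (1 - Real.cos θ * y))) := by
  set x := slitToDisk y
  have hx := mul_one_add_slitToDisk_sq hy
  have hd : 1 - Real.cos θ * y ≠ 0 :=
    (one_sub_mul_pos ⟨Real.neg_one_le_cos θ, Real.cos_le_one θ⟩ hy).ne'
  have hd' : normSq (circleMap 0 1 θ - x) = (1 + x ^ 2) * (1 - Real.cos θ * y) := by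
    rw [normSq_apply]
    simp [circleMap, exp_re, exp_im]
    linear_combination Real.sin_sq_add_cos_sq θ + Real.cos θ * hx
  have h0 : (1 + x ^ 2) ≠ 0 := by positivity
  rw [herglotzRieszKernel_def, sub_zero, sub_zero, div_im, hd']
  simp [circleMap, exp_re, exp_im]
  field_simp
  linear_combination Real.sin θ * hx

/-- The point of the upper half of the unit circle with real part `t ∈ [-1, 1]`. -/
noncomputable def upperArc (t : ℝ) : ℂ := exp (Real.arccos t * I)

theorem continuous_upperArc : Continuous upperArc := by
  unfold upperArc
  fun_prop

theorem upperArc_mem_sphere (t : ℝ) : upperArc t ∈ Metric.sphere 0 1 := by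
  simp [upperArc, norm_exp_ofReal_mul_I]

theorem upperArc_im_nonneg (t : ℝ) : 0 ≤ (upperArc t).im := by
  rw [upperArc, exp_ofReal_mul_I_im, Real.sin_arccos]
  exact Real.sqrt_nonneg _

theorem upperArc_cos {θ : ℝ} (hθ : θ ∈ Icc 0 Real.pi) :
    upperArc (Real.cos θ) = circleMap 0 1 θ := by
  simp [upperArc, circleMap, Real.arccos_cos hθ.1 hθ.2]

theorem upperArc_re {z : ℂ} (hz : z ∈ Metric.sphere 0 1) (hz0 : 0 ≤ z.im) : upperArc z.re = z := by
  have hexp : circleMap 0 1 z.arg = z := by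
    have h := norm_mul_exp_arg_mul_I z
    rwa [mem_sphere_zero_iff_norm.1 hz, ← circleMap_zero] at h
  have hre : Real.cos z.arg = z.re := by rw [← one_mul (Real.cos _), ← circleMap_zero_re, hexp]
  rw [← hre, upperArc_cos ⟨arg_nonneg_iff.2 hz0, arg_le_pi z⟩, hexp]

theorem circleAverage_eq_integral_of_conj {g : ℂ → ℝ} (hg : ContinuousOn g (Metric.sphere 0 1))
    (hconj : ∀ z ∈ Metric.sphere 0 1, g (conj z) = g z) :
    Real.circleAverage g 0 1 = Real.pi⁻¹ * ∫ θ in (0 : ℝ)..Real.pi, g (circleMap 0 1 θ) := by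
  have hsphere (θ : ℝ) : circleMap 0 1 θ ∈ Metric.sphere 0 1 := circleMap_mem_sphere 0 zero_le_one θ
  have hintegrable (a b : ℝ) : IntervalIntegrable (fun θ ↦ g (circleMap 0 1 θ)) volume a b :=
    (hg.comp_continuous (by fun_prop) hsphere).intervalIntegrable a b
  have hlower : ∫ θ in Real.pi..2 * Real.pi, g (circleMap 0 1 θ) =
      ∫ θ in (0 : ℝ)..Real.pi, g (circleMap 0 1 θ) := by
    calc ∫ θ in Real.pi..2 * Real.pi, g (circleMap 0 1 θ)
        = ∫ θ in (0 : ℝ)..Real.pi, g (circleMap 0 1 (2 * Real.pi - θ)) := by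
          rw [intervalIntegral.integral_comp_sub_left (fun θ ↦ g (circleMap 0 1 θ))]
          ring_nf
      _ = ∫ θ in (0 : ℝ)..Real.pi, g (circleMap 0 1 θ) := by
          simp only [(periodic_circleMap 0 1).sub_eq', ← conj_circleMap_zero, hconj _ (hsphere _)]
  rw [Real.circleAverage_def, ← intervalIntegral.integral_add_adjacent_intervals
    (hintegrable 0 Real.pi) (hintegrable Real.pi _), hlower, smul_eq_mul]
  field_simp
  ring

theorem integral_sin_mul_comp_cos {h : ℝ → ℝ} (hh : ContinuousOn h (Icc (-1) 1)) :
    ∫ θ in (0 : ℝ)..Real.pi, Real.sin θ * h (Real.cos θ) = ∫ t in (-1 : ℝ)..1, h t := by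
  have hmaps : Real.cos '' uIcc 0 Real.pi ⊆ Icc (-1) 1 :=
    image_subset_iff.2 fun θ _ ↦ Real.cos_mem_Icc θ
  have hsubst := intervalIntegral.integral_comp_mul_deriv'' (Real.continuous_cos.continuousOn)
    (fun θ _ ↦ (Real.hasDerivAt_cos θ).hasDerivWithinAt) (by fun_prop) (hh.mono hmaps)
  rw [Real.cos_zero, Real.cos_pi, intervalIntegral.integral_symm (-1)] at hsubst
  simpa only [Function.comp_apply, mul_neg, intervalIntegral.integral_neg, neg_inj, mul_comm]
    using hsubst

theorem continuous_im_comp_upperArc (hu : DiffContOnCl ℂ u (Metric.ball 0 1)) :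
    Continuous fun t ↦ (u (upperArc t)).im :=
  continuous_im.comp <| (continuousOn_sphere_of_diffContOnCl one_pos hu).comp_continuous
    continuous_upperArc fun t ↦ by simpa using upperArc_mem_sphere t

theorem re_apply_slitToDisk (hu : DiffContOnCl ℂ u (Metric.ball 0 1))
    (hconj : ∀ z ∈ Metric.sphere 0 1, u (conj z) = conj (u z)) {y : ℝ} (hy : y ∈ Ioo (-1) 1) :
    (u (slitToDisk y)).re =
      (u 0).re + Real.pi⁻¹ * pickTransform (fun t ↦ (u (upperArc t)).im) y := by
  have hx : (slitToDisk y : ℂ) ∈ Metric.ball 0 1 := by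
    rw [mem_ball_zero_iff, norm_real]
    exact abs_lt.2 (slitToDisk_mem_Ioo hy)
  have hsphere := abs_of_pos (one_pos : (0 : ℝ) < 1)
  have havg := circleAverage_im_herglotzRieszKernel_mul_im hu hx
  rw [circleAverage_eq_integral_of_conj] at havg
  · have harc : ∫ θ in (0 : ℝ)..Real.pi, (herglotzRieszKernel 0 (slitToDisk y) (circleMap 0 1 θ)).im
        * (u (circleMap 0 1 θ)).im = -pickTransform (fun t ↦ (u (upperArc t)).im) y := by
      rw [pickTransform, ← integral_sin_mul_comp_cos, ← intervalIntegral.integral_neg]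
      · refine intervalIntegral.integral_congr fun θ hθ ↦ ?_
        rw [uIcc_of_le Real.pi_nonneg] at hθ
        simp only [im_herglotzRieszKernel_slitToDisk hy, upperArc_cos hθ]
        ring
      · exact (continuousOn_pickTransform_integrand
          (continuous_im_comp_upperArc hu).continuousOn).comp (f := fun t ↦ (t, y)) (by fun_prop)
            fun t ht ↦ ⟨ht, hy⟩
    rw [harc] at havg
    linarith
  · have hK := continuousOn_herglotzRieszKernel_sphere hx
    have huc := continuousOn_sphere_of_diffContOnCl one_pos hu
    rw [hsphere] at hK huc
    exact (continuous_im.comp_continuousOn hK).mul (continuous_im.comp_continuousOn huc)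
  · intro z hz
    have hkernel : herglotzRieszKernel 0 (slitToDisk y) (conj z) =
        conj (herglotzRieszKernel 0 (slitToDisk y) z) := by
      simp [herglotzRieszKernel_def]
    rw [hkernel, hconj z hz, conj_im, conj_im, neg_mul_neg]

end BoundaryRepresentation

section DiskCriterion

open ComplexConjugate

variable {𝔸 : Type*} [CStarAlgebra 𝔸] [PartialOrder 𝔸] [StarOrderedRing 𝔸] {u G : ℂ → ℂ}

theorem operatorMonotoneOn_re_comp_slitToDisk_of_diffContOnCl
    (hu : DiffContOnCl ℂ u (Metric.ball 0 1))
    (hconj : ∀ z ∈ Metric.sphere 0 1, u (conj z) = conj (u z))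
    (hpos : ∀ z ∈ Metric.sphere 0 1, 0 ≤ z.im → 0 ≤ (u z).im) :
    OperatorMonotoneOn 𝔸 (fun y ↦ (u (slitToDisk y)).re) (Ioo (-1) 1) := by
  have hW := (continuous_im_comp_upperArc hu).continuousOn (s := Icc (-1) 1)
  have hpick := operatorMonotoneOn_pickTransform (𝔸 := 𝔸) hW
    fun t _ ↦ hpos _ (upperArc_mem_sphere t) (upperArc_im_nonneg t)
  exact (hpick.affine (continuousOn_pickTransform hW) (u 0).re (by positivity)).congr
    fun y hy ↦ (re_apply_slitToDisk hu hconj hy).symm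

theorem OperatorMonotoneOn.im_nonneg_of_mem_sphere (hinf : ¬ FiniteDimensional ℂ H)
    (hu : DiffContOnCl ℂ u (Metric.ball 0 1))
    (hconj : ∀ z ∈ Metric.sphere 0 1, u (conj z) = conj (u z))
    (hmono : OperatorMonotoneOn (H →L[ℂ] H) (fun y ↦ (u (slitToDisk y)).re) (Ioo (-1) 1)) :
    ∀ z ∈ Metric.sphere 0 1, 0 ≤ z.im → 0 ≤ (u z).im := by
  have hW := (continuous_im_comp_upperArc hu).continuousOn (s := Icc (-1) 1)
  have hrep {y : ℝ} (hy : y ∈ Ioo (-1) 1) := re_apply_slitToDisk hu hconj hy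
  have hcont : ContinuousOn (fun y : ℝ ↦ (u (slitToDisk y)).re) (Ioo (-1) 1) :=
    (continuousOn_const.add (continuousOn_const.mul (continuousOn_pickTransform hW))).congr
      fun _ hy ↦ hrep hy
  have hpick : OperatorMonotoneOn (H →L[ℂ] H) (pickTransform fun t ↦ (u (upperArc t)).im)
      (Ioo (-1) 1) := by
    refine (hmono.affine hcont (-(Real.pi * (u 0).re)) Real.pi_nonneg).congr fun y hy ↦ ?_
    simp only [hrep hy]
    field_simp
    ring
  intro z hz hz0
  rw [← upperArc_re hz hz0]
  exact hpick.weight_nonneg hinf hW _ (abs_le.1 <|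
    (Complex.abs_re_le_norm z).trans_eq (mem_sphere_zero_iff_norm.1 hz))

theorem mapsTo_ofReal_mul_ball_closedBall {r : ℝ} (hr : r ∈ Ioo 0 1) :
    MapsTo (fun z : ℂ ↦ r * z) (Metric.closedBall 0 1) (Metric.ball 0 1) := by
  intro z hz
  rw [mem_closedBall_zero_iff] at hz
  rw [mem_ball_zero_iff, norm_mul, Complex.norm_real, Real.norm_of_nonneg hr.1.le]
  nlinarith [hr.1, hr.2, norm_nonneg z]

theorem diffContOnCl_comp_ofReal_mul (hG : DifferentiableOn ℂ G (Metric.ball 0 1)) {r : ℝ}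
    (hr : r ∈ Ioo 0 1) : DiffContOnCl ℂ (fun z ↦ G (r * z)) (Metric.ball 0 1) := by
  refine DifferentiableOn.diffContOnCl ?_
  rw [closure_ball _ one_ne_zero]
  exact hG.comp (by fun_prop) (mapsTo_ofReal_mul_ball_closedBall hr)

theorem operatorMonotoneOn_re_comp_mul_slitToDisk (hG : DifferentiableOn ℂ G (Metric.ball 0 1))
    (hconj : ∀ z ∈ Metric.ball 0 1, G (conj z) = conj (G z))
    (hpos : ∀ z ∈ Metric.ball 0 1, 0 ≤ z.im → 0 ≤ (G z).im) {r : ℝ} (hr : r ∈ Ioo 0 1) :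
    OperatorMonotoneOn 𝔸 (fun y ↦ (G (r * slitToDisk y)).re) (Ioo (-1) 1) := by
  have hmem {z : ℂ} (hz : z ∈ Metric.sphere 0 1) : r * z ∈ Metric.ball 0 1 :=
    mapsTo_ofReal_mul_ball_closedBall hr (Metric.sphere_subset_closedBall hz)
  refine operatorMonotoneOn_re_comp_slitToDisk_of_diffContOnCl
    (diffContOnCl_comp_ofReal_mul hG hr) (fun z hz ↦ ?_) fun z hz hz0 ↦ ?_
  · rw [← hconj _ (hmem hz), map_mul, Complex.conj_ofReal]
  · refine hpos _ (hmem hz) ?_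
    rw [Complex.im_ofReal_mul]
    exact mul_nonneg hr.1.le hz0

theorem operatorMonotoneOn_re_comp_slitToDisk (hG : DifferentiableOn ℂ G (Metric.ball 0 1))
    (hconj : ∀ z ∈ Metric.ball 0 1, G (conj z) = conj (G z))
    (hpos : ∀ z ∈ Metric.ball 0 1, 0 ≤ z.im → 0 ≤ (G z).im) :
    OperatorMonotoneOn 𝔸 (fun y ↦ (G (slitToDisk y)).re) (Ioo (-1) 1) := by
  let F (r y : ℝ) : ℝ := (G (r * slitToDisk y)).re
  have hF : ContinuousOn F.uncurry (Ioc 0 1 ×ˢ Ioo (-1) 1) := by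
    refine Complex.continuous_re.comp_continuousOn (hG.continuousOn.comp ?_ ?_)
    · have := continuous_slitToDisk
      fun_prop
    · rintro ⟨r, y⟩ ⟨hr, hy⟩
      have hσ := abs_lt.2 (slitToDisk_mem_Ioo hy)
      rw [mem_ball_zero_iff, norm_mul, Complex.norm_real, Complex.norm_real,
        Real.norm_of_nonneg hr.1.le, Real.norm_eq_abs]
      nlinarith [hr.1, hr.2, abs_nonneg (slitToDisk y)]
  have hlim (K : Set ℝ) (hKS : K ⊆ Ioo (-1) 1) (hK : IsCompact K) :
      TendstoUniformlyOn F (F 1) (𝓝[Ioo 0 1] 1) K := fun v hv ↦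
    (tendstoUniformlyOn_of_continuousOn_uncurry hK (hF.mono (prod_mono_right hKS))
      (right_mem_Ioc.2 one_pos) v hv).filter_mono (nhdsWithin_mono _ Ioo_subset_Ioc_self)
  have := right_nhdsWithin_Ioo_neBot (one_pos : (0 : ℝ) < 1)
  have h : OperatorMonotoneOn 𝔸 (F 1) (Ioo (-1) 1) := by
    refine .of_tendstoUniformlyOn (l := 𝓝[Ioo 0 1] 1) ?_ ?_ hlim
    · filter_upwards [self_mem_nhdsWithin] with r hr
      exact operatorMonotoneOn_re_comp_mul_slitToDisk hG hconj hpos hr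
    · filter_upwards [self_mem_nhdsWithin] with r hr
      exact hF.comp (f := fun y ↦ (r, y)) (by fun_prop) fun y hy ↦ ⟨Ioo_subset_Ioc_self hr, hy⟩
  simpa only [F, Complex.ofReal_one, one_mul] using h

theorem continuousOn_re_comp_slitToDisk (hG : ContinuousOn G (Metric.ball 0 1)) :
    ContinuousOn (fun y : ℝ ↦ (G (slitToDisk y)).re) (Ioo (-1) 1) := by
  refine Complex.continuous_re.comp_continuousOn (hG.comp
    (Complex.continuous_ofReal.comp continuous_slitToDisk).continuousOn fun y hy ↦ ?_)
  rw [mem_ball_zero_iff, Complex.norm_real]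
  exact abs_lt.2 (slitToDisk_mem_Ioo hy)

-- The dilation `z ↦ r z` of the disc acts on `(-1, 1)`, in the coordinate `y = diskToSlit z`, by
-- the function `φ`, which is itself operator monotone.
theorem OperatorMonotoneOn.re_comp_mul_slitToDisk
    (hmono : OperatorMonotoneOn 𝔸 (fun y ↦ (G (slitToDisk y)).re) (Ioo (-1) 1))
    (hG : ContinuousOn G (Metric.ball 0 1)) {r : ℝ} (hr : r ∈ Ioo 0 1) :
    OperatorMonotoneOn 𝔸 (fun y ↦ (G (r * slitToDisk y)).re) (Ioo (-1) 1) := by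
  let φ (y : ℝ) : ℝ := (diskToSlit (r * slitToDisk y)).re
  have hφ : OperatorMonotoneOn 𝔸 φ (Ioo (-1) 1) :=
    operatorMonotoneOn_re_comp_mul_slitToDisk differentiableOn_diskToSlit
      (fun z _ ↦ diskToSlit_conj z)
      (fun z hz ↦ diskToSlit_im_nonneg (mem_ball_zero_iff.1 hz).le) hr
  have hφc : ContinuousOn φ (Ioo (-1) 1) := continuousOn_re_comp_slitToDisk
    (G := fun z ↦ diskToSlit (r * z))
    (diffContOnCl_comp_ofReal_mul differentiableOn_diskToSlit hr).differentiableOn.continuousOn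
  have hmem {y : ℝ} (hy : y ∈ Ioo (-1) 1) : r * slitToDisk y ∈ Ioo (-1) 1 := by
    have hσ := slitToDisk_mem_Ioo hy
    constructor <;> nlinarith [hr.1, hr.2, hσ.1, hσ.2]
  have hφ_eq (y : ℝ) : φ y = 2 * (r * slitToDisk y) / (1 + (r * slitToDisk y) ^ 2) := by
    simp only [φ]
    rw [← Complex.ofReal_mul, diskToSlit_ofReal, Complex.ofReal_re]
  have hmaps : MapsTo φ (Ioo (-1) 1) (Ioo (-1) 1) := fun y hy ↦
    hφ_eq y ▸ two_mul_div_one_add_sq_mem_Ioo (hmem hy)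
  refine (hmono.comp hφ (continuousOn_re_comp_slitToDisk hG) hφc hmaps).congr fun y hy ↦ ?_
  rw [Function.comp_apply, hφ_eq, slitToDisk_two_mul_div (hmem hy), Complex.ofReal_mul]

theorem OperatorMonotoneOn.im_nonneg_of_mem_ball (hinf : ¬ FiniteDimensional ℂ H)
    (hG : DifferentiableOn ℂ G (Metric.ball 0 1))
    (hconj : ∀ z ∈ Metric.ball 0 1, G (conj z) = conj (G z))
    (hmono : OperatorMonotoneOn (H →L[ℂ] H) (fun y ↦ (G (slitToDisk y)).re) (Ioo (-1) 1)) :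
    ∀ z ∈ Metric.ball 0 1, 0 ≤ z.im → 0 ≤ (G z).im := by
  have him (r : ℝ) (hr : r ∈ Ioo 0 1) :
      ∀ z ∈ Metric.sphere 0 1, 0 ≤ z.im → 0 ≤ (G (r * z)).im := by
    refine OperatorMonotoneOn.im_nonneg_of_mem_sphere hinf (diffContOnCl_comp_ofReal_mul hG hr)
      (fun z hz ↦ ?_) (hmono.re_comp_mul_slitToDisk hG.continuousOn hr)
    rw [← hconj _ (mapsTo_ofReal_mul_ball_closedBall hr (Metric.sphere_subset_closedBall hz)),
      map_mul, Complex.conj_ofReal]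
  intro z hz hz0
  rcases eq_or_ne z 0 with rfl | hne
  · refine (Complex.conj_eq_iff_im.1 ?_).ge
    rw [← hconj _ hz, map_zero]
  · have hnorm := norm_pos_iff.2 hne
    have h := him ‖z‖ ⟨hnorm, mem_ball_zero_iff.1 hz⟩ (z / ‖z‖) (by simp [hne])
      (by rw [Complex.div_ofReal_im]; positivity)
    rwa [mul_div_cancel₀ _ (by simpa using hne)] at h

end DiskCriterion

section Reflection

open Complex ComplexConjugate

variable {E : Type*} [NormedAddCommGroup E] [NormedSpace ℂ E] {G : ℂ → E} {g : ℂ → ℂ} {U : Set ℂ}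
  {c : ℝ}

theorem wedgeIntegral_eq_neg_of_differentiableAt_of_im_ne {z w : ℂ}
    (hGc : ContinuousOn G (Rectangle z w))
    (hGd : ∀ ζ ∈ Rectangle z w, ζ.im ≠ c → DifferentiableAt ℂ G ζ)
    (hc : c ∉ Ioo (min z.im w.im) (max z.im w.im)) :
    wedgeIntegral z w G = -wedgeIntegral w z G := by
  rw [← add_eq_zero_iff_eq_neg, wedgeIntegral_add_wedgeIntegral_eq]
  refine integral_boundary_rect_eq_zero_of_continuousOn_of_differentiableOn G z w hGc fun ζ hζ ↦ ?_
  refine (hGd ζ ⟨Ioo_subset_Icc_self hζ.1, Ioo_subset_Icc_self hζ.2⟩ ?_).differentiableWithinAt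
  exact fun h ↦ hc (h ▸ hζ.2)

theorem wedgeIntegral_add_wedgeIntegral_eq_add {z w : ℂ} (hG : ContinuousOn G (Rectangle z w))
    (hc : c ∈ uIcc z.im w.im) :
    wedgeIntegral z w G + wedgeIntegral w z G =
      (wedgeIntegral z ⟨w.re, c⟩ G + wedgeIntegral ⟨w.re, c⟩ z G) +
        (wedgeIntegral ⟨z.re, c⟩ w G + wedgeIntegral w ⟨z.re, c⟩ G) := by
  have hvert {x : ℝ} (hx : x ∈ uIcc z.re w.re) {s t : ℝ} (hs : s ∈ uIcc z.im w.im)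
      (ht : t ∈ uIcc z.im w.im) : IntervalIntegrable (fun y : ℝ ↦ G (x + y * I)) volume s t := by
    refine (hG.comp (by fun_prop) fun y hy ↦ ?_).intervalIntegrable
    simp only [Rectangle, mem_reProdIm]
    simpa using ⟨hx, uIcc_subset_uIcc hs ht hy⟩
  simp only [wedgeIntegral_add_wedgeIntegral_eq]
  rw [← intervalIntegral.integral_add_adjacent_intervals (hvert left_mem_uIcc left_mem_uIcc hc)
      (hvert left_mem_uIcc hc right_mem_uIcc),
    ← intervalIntegral.integral_add_adjacent_intervals (hvert right_mem_uIcc left_mem_uIcc hc)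
      (hvert right_mem_uIcc hc right_mem_uIcc), smul_add, smul_add]
  abel

theorem isConservativeOn_of_differentiableAt_of_im_ne (hGc : ContinuousOn G U)
    (hGd : ∀ ζ ∈ U, ζ.im ≠ c → DifferentiableAt ℂ G ζ) : IsConservativeOn G U := by
  intro z w hzw
  have hrect {ζ ξ : ℂ} (hsub : Rectangle ζ ξ ⊆ Rectangle z w)
      (hc : c ∉ Ioo (min ζ.im ξ.im) (max ζ.im ξ.im)) :=
    wedgeIntegral_eq_neg_of_differentiableAt_of_im_ne (hGc.mono (hsub.trans hzw))
      (fun η hη ↦ hGd η (hzw (hsub hη))) hc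
  by_cases hc : c ∈ uIcc z.im w.im
  · have hlower := hrect (ζ := z) (ξ := ⟨w.re, c⟩)
      (reProdIm_subset_iff.2 <| prod_mono_right <| uIcc_subset_uIcc_left hc) (by grind)
    have hupper := hrect (ζ := ⟨z.re, c⟩) (ξ := w)
      (reProdIm_subset_iff.2 <| prod_mono_right <| uIcc_subset_uIcc_right hc) (by grind)
    rw [← add_eq_zero_iff_eq_neg] at hlower hupper ⊢
    rw [wedgeIntegral_add_wedgeIntegral_eq_add (hGc.mono hzw) hc, hlower, hupper, add_zero]
  · exact hrect subset_rfl fun h ↦ hc (Ioo_subset_Icc_self h)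

theorem differentiableOn_of_differentiableAt_of_im_ne [CompleteSpace E] (hU : IsOpen U)
    (hGc : ContinuousOn G U) (hGd : ∀ ζ ∈ U, ζ.im ≠ c → DifferentiableAt ℂ G ζ) :
    DifferentiableOn ℂ G U :=
  (isConservativeOn_and_continuousOn_iff_isDifferentiableOn hU).1
    ⟨isConservativeOn_of_differentiableAt_of_im_ne hGc hGd, hGc⟩

/-- The Schwarz reflection of `g` across the real axis: it agrees with `g` on the closed upper half
plane and commutes with conjugation wherever `g` is real on the real axis. -/
noncomputable def schwarzReflection (g : ℂ → ℂ) (z : ℂ) : ℂ :=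
  if 0 ≤ z.im then g z else conj (g (conj z))

theorem schwarzReflection_of_im_nonneg (g : ℂ → ℂ) {z : ℂ} (hz : 0 ≤ z.im) :
    schwarzReflection g z = g z :=
  if_pos hz

theorem schwarzReflection_of_im_neg (g : ℂ → ℂ) {z : ℂ} (hz : z.im < 0) :
    schwarzReflection g z = conj (g (conj z)) :=
  if_neg hz.not_ge

theorem schwarzReflection_conj {z : ℂ} (hg : z.im = 0 → (g z).im = 0) :
    schwarzReflection g (conj z) = conj (schwarzReflection g z) := by
  rcases lt_trichotomy z.im 0 with h | h | h
  · rw [schwarzReflection_of_im_neg g h, schwarzReflection_of_im_nonneg g (by simpa using h.le),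
      conj_conj]
  · rw [conj_eq_iff_im.2 h, schwarzReflection_of_im_nonneg g h.ge, conj_eq_iff_im.2 (hg h)]
  · rw [schwarzReflection_of_im_nonneg g h.le, schwarzReflection_of_im_neg g (by simpa using h),
      conj_conj]

theorem continuousOn_schwarzReflection (hU : MapsTo conj U U)
    (hgc : ContinuousOn g (U ∩ {z | 0 ≤ z.im})) (hg : ∀ z ∈ U, z.im = 0 → (g z).im = 0) :
    ContinuousOn (schwarzReflection g) U := by
  have hlower : ContinuousOn (fun z ↦ conj (g (conj z))) (U ∩ {z | z.im ≤ 0}) :=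
    continuous_conj.comp_continuousOn <| hgc.comp continuous_conj.continuousOn
      fun z hz ↦ ⟨hU hz.1, by simpa using hz.2⟩
  refine ContinuousOn.if (fun z hz ↦ ?_) (hgc.mono ?_) (hlower.mono ?_)
  · have hz0 : z.im = 0 := by
      simpa only [frontier_setOfPred_le_im, mem_ofPred_eq] using hz.2
    rw [conj_eq_iff_im.2 hz0, conj_eq_iff_im.2 (hg z hz.1 hz0)]
  · exact inter_subset_inter_right U (isClosed_le continuous_const continuous_im).closure_subset
  · simp only [not_le]
    exact inter_subset_inter_right U (closure_lt_subset_le continuous_im continuous_const)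

theorem differentiableAt_schwarzReflection {z : ℂ} (hz : z.im ≠ 0)
    (hg : ∀ w ∈ ({z, conj z} : Set ℂ), 0 < w.im → DifferentiableAt ℂ g w) :
    DifferentiableAt ℂ (schwarzReflection g) z := by
  rcases lt_or_gt_of_ne hz with h | h
  · have hd := (hg (conj z) (.inr rfl) (by simpa using h)).conj_conj
    rw [conj_conj] at hd
    refine hd.congr_of_eventuallyEq ?_
    filter_upwards [(isOpen_lt continuous_im continuous_const).mem_nhds h] with w hw
    exact schwarzReflection_of_im_neg g hw
  · refine (hg z (.inl rfl) h).congr_of_eventuallyEq ?_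
    filter_upwards [(isOpen_lt continuous_const continuous_im).mem_nhds h] with w hw
    exact schwarzReflection_of_im_nonneg g hw.le

theorem differentiableOn_schwarzReflection (hUo : IsOpen U) (hU : MapsTo conj U U)
    (hgc : ContinuousOn g (U ∩ {z | 0 ≤ z.im})) (hgd : DifferentiableOn ℂ g (U ∩ {z | 0 < z.im}))
    (hg : ∀ z ∈ U, z.im = 0 → (g z).im = 0) : DifferentiableOn ℂ (schwarzReflection g) U := by
  refine differentiableOn_of_differentiableAt_of_im_ne (c := 0) hUo
    (continuousOn_schwarzReflection hU hgc hg) fun z hz hz0 ↦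
      differentiableAt_schwarzReflection hz0 fun w hwz hw ↦ ?_
  have hwU : w ∈ U := by
    rcases hwz with rfl | rfl
    exacts [hz, hU hz]
  exact hgd.differentiableAt
    ((hUo.inter (isOpen_lt continuous_const continuous_im)).mem_nhds ⟨hwU, hw⟩)

end Reflection

theorem mapsTo_const_add_mul_Ioo (c : ℝ) {ρ : ℝ} (hρ : 0 < ρ) :
    MapsTo (fun x ↦ c + ρ * x) (Ioo (-1) 1) (Ioo (c - ρ) (c + ρ)) := by
  intro x hx
  constructor <;> nlinarith [hx.1, hx.2]

theorem exists_Ioo_of_isCompact_subset_isOpen {K S : Set ℝ} (hK : IsCompact K) (hne : K.Nonempty)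
    (hKS : K ⊆ S) (hS : IsOpen S) (hS' : S.OrdConnected) :
    ∃ c ρ : ℝ, 0 < ρ ∧ K ⊆ Ioo (c - ρ) (c + ρ) ∧ Ioo (c - ρ) (c + ρ) ⊆ S := by
  obtain ⟨l, hlK, hl⟩ := hK.exists_isLeast hne
  obtain ⟨u, huK, hu⟩ := hK.exists_isGreatest hne
  have hlS := hS.mem_nhds (hKS hlK)
  have huS := hS.mem_nhds (hKS huK)
  obtain ⟨l', hl'S, hl' : l' < l⟩ := Filter.nonempty_of_mem
    (inter_mem (mem_nhdsWithin_of_mem_nhds hlS) (self_mem_nhdsWithin (s := Iio l)))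
  obtain ⟨u', hu'S, hu' : u < u'⟩ := Filter.nonempty_of_mem
    (inter_mem (mem_nhdsWithin_of_mem_nhds huS) (self_mem_nhdsWithin (s := Ioi u)))
  have hl'u' : l' < u' := hl'.trans_le ((hl huK).trans hu'.le)
  have hleft : (l' + u') / 2 - (u' - l') / 2 = l' := by ring
  have hright : (l' + u') / 2 + (u' - l') / 2 = u' := by ring
  refine ⟨(l' + u') / 2, (u' - l') / 2, by linarith, ?_⟩
  rw [hleft, hright]
  exact ⟨fun x hx ↦ ⟨hl'.trans_le (hl hx), (hu hx).trans_lt hu'⟩,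
    Ioo_subset_Icc_self.trans (hS'.out hl'S hu'S)⟩

section Extension

open ComplexConjugate

/-- `F` extends the real function `f` on `S` continuously to the open upper half plane together
with `S`, and is holomorphic on the open upper half plane. -/
structure IsUpperHalfPlaneExtension (F : ℂ → ℂ) (f : ℝ → ℝ) (S : Set ℝ) : Prop where
  continuousOn : ContinuousOn F ({z : ℂ | 0 < z.im} ∪ (fun x : ℝ ↦ (x : ℂ)) '' S)
  differentiableOn : DifferentiableOn ℂ F {z : ℂ | 0 < z.im}
  apply_ofReal : ∀ x ∈ S, F x = f x

/-- The pull-back of `F` along `diskToSlit`, from the upper half disc to the whole unit disc by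
Schwarz reflection. -/
noncomputable def diskPullback (F : ℂ → ℂ) : ℂ → ℂ := schwarzReflection (F ∘ diskToSlit)

theorem diskPullback_of_im_nonneg (F : ℂ → ℂ) {z : ℂ} (hz : 0 ≤ z.im) :
    diskPullback F z = F (diskToSlit z) :=
  schwarzReflection_of_im_nonneg _ hz

theorem exists_diskToSlit_eq_ofReal {z : ℂ} (hz : z ∈ Metric.ball 0 1) (hz0 : z.im = 0) :
    ∃ y ∈ Ioo (-1) 1, diskToSlit z = (y : ℝ) := by
  have hre : (z.re : ℂ) = z := Complex.conj_eq_iff_re.1 (Complex.conj_eq_iff_im.2 hz0)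
  rw [← hre, mem_ball_zero_iff, Complex.norm_real] at hz
  exact ⟨_, two_mul_div_one_add_sq_mem_Ioo (abs_lt.1 hz), by rw [← diskToSlit_ofReal, hre]⟩

namespace IsUpperHalfPlaneExtension

variable {F : ℂ → ℂ} {f : ℝ → ℝ} {S T : Set ℝ}

theorem mono (hF : IsUpperHalfPlaneExtension F f S) (hTS : T ⊆ S) :
    IsUpperHalfPlaneExtension F f T :=
  ⟨hF.continuousOn.mono (union_subset_union_right _ (image_mono hTS)), hF.differentiableOn,
    fun x hx ↦ hF.apply_ofReal x (hTS hx)⟩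

theorem comp_const_add_mul (hF : IsUpperHalfPlaneExtension F f S) (c : ℝ) {ρ : ℝ} (hρ : 0 < ρ)
    (hST : MapsTo (fun x ↦ c + ρ * x) T S) :
    IsUpperHalfPlaneExtension (fun z ↦ F (c + ρ * z)) (fun x ↦ f (c + ρ * x)) T := by
  have hmaps : MapsTo (fun z : ℂ ↦ c + ρ * z) {z | 0 < z.im} {z | 0 < z.im} :=
    fun z (hz : 0 < z.im) ↦ by simpa using mul_pos hρ hz
  refine ⟨hF.continuousOn.comp (by fun_prop) ?_, hF.differentiableOn.comp (by fun_prop) hmaps, ?_⟩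
  · rintro z (hz | ⟨x, hx, rfl⟩)
    · exact .inl (hmaps hz)
    · exact .inr ⟨c + ρ * x, hST hx, by push_cast; rfl⟩
  · intro x hx
    rw [← hF.apply_ofReal _ (hST hx)]
    push_cast
    rfl

theorem continuousOn_real (hF : IsUpperHalfPlaneExtension F f S) : ContinuousOn f S :=
  (Complex.continuous_re.comp_continuousOn <| hF.continuousOn.comp
    Complex.continuous_ofReal.continuousOn fun x hx ↦ .inr ⟨x, hx, rfl⟩).congr fun x hx ↦ by
      rw [Function.comp_apply, Function.comp_apply, hF.apply_ofReal x hx, Complex.ofReal_re]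

theorem im_comp_diskToSlit_eq_zero (hF : IsUpperHalfPlaneExtension F f (Ioo (-1) 1)) {z : ℂ}
    (hz : z ∈ Metric.ball 0 1) (hz0 : z.im = 0) : ((F ∘ diskToSlit) z).im = 0 := by
  obtain ⟨y, hy, hyz⟩ := exists_diskToSlit_eq_ofReal hz hz0
  rw [Function.comp_apply, hyz, hF.apply_ofReal y hy, Complex.ofReal_im]

theorem differentiableOn_diskPullback (hF : IsUpperHalfPlaneExtension F f (Ioo (-1) 1)) :
    DifferentiableOn ℂ (diskPullback F) (Metric.ball 0 1) := by
  refine differentiableOn_schwarzReflection Metric.isOpen_ball (fun z hz ↦ ?_) ?_ ?_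
    fun z ↦ hF.im_comp_diskToSlit_eq_zero
  · simpa using hz
  · refine hF.continuousOn.comp (differentiableOn_diskToSlit.continuousOn.mono inter_subset_left) ?_
    rintro z ⟨hz, hz0 : 0 ≤ z.im⟩
    rcases hz0.eq_or_lt with h | h
    · obtain ⟨y, hy, hyz⟩ := exists_diskToSlit_eq_ofReal hz h.symm
      exact .inr ⟨y, hy, hyz.symm⟩
    · exact .inl (diskToSlit_im_pos (mem_ball_zero_iff.1 hz) h)
  · refine hF.differentiableOn.comp (differentiableOn_diskToSlit.mono inter_subset_left) ?_
    exact fun z hz ↦ diskToSlit_im_pos (mem_ball_zero_iff.1 hz.1) hz.2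

theorem diskPullback_conj (hF : IsUpperHalfPlaneExtension F f (Ioo (-1) 1)) {z : ℂ}
    (hz : z ∈ Metric.ball 0 1) : diskPullback F (conj z) = conj (diskPullback F z) :=
  schwarzReflection_conj (hF.im_comp_diskToSlit_eq_zero hz)

theorem diskPullback_slitToDisk (hF : IsUpperHalfPlaneExtension F f (Ioo (-1) 1)) {y : ℝ}
    (hy : y ∈ Ioo (-1) 1) : diskPullback F (slitToDisk y) = f y := by
  rw [diskPullback_of_im_nonneg F (Complex.ofReal_im _).ge, diskToSlit_slitToDisk hy,
    hF.apply_ofReal y hy]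

theorem im_diskPullback_nonneg (hF : IsUpperHalfPlaneExtension F f (Ioo (-1) 1))
    (hpos : ∀ z : ℂ, 0 < z.im → 0 ≤ (F z).im) :
    ∀ z ∈ Metric.ball 0 1, 0 ≤ z.im → 0 ≤ (diskPullback F z).im := by
  intro z hz hz0
  rw [diskPullback_of_im_nonneg F hz0]
  rcases hz0.eq_or_lt with h | h
  · exact (hF.im_comp_diskToSlit_eq_zero hz h.symm).ge
  · exact hpos _ (diskToSlit_im_pos (mem_ball_zero_iff.1 hz) h)

section

variable {𝔸 : Type*} [CStarAlgebra 𝔸] [PartialOrder 𝔸] [StarOrderedRing 𝔸]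

theorem operatorMonotoneOn_Ioo_neg_one_one (hF : IsUpperHalfPlaneExtension F f (Ioo (-1) 1))
    (hpos : ∀ z : ℂ, 0 < z.im → 0 ≤ (F z).im) : OperatorMonotoneOn 𝔸 f (Ioo (-1) 1) :=
  (operatorMonotoneOn_re_comp_slitToDisk hF.differentiableOn_diskPullback
    (fun _ ↦ hF.diskPullback_conj) (hF.im_diskPullback_nonneg hpos)).congr
      fun y hy ↦ by simp only [hF.diskPullback_slitToDisk hy, Complex.ofReal_re]

theorem operatorMonotoneOn_Ioo {c ρ : ℝ} (hρ : 0 < ρ)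
    (hF : IsUpperHalfPlaneExtension F f (Ioo (c - ρ) (c + ρ)))
    (hpos : ∀ z : ℂ, 0 < z.im → 0 ≤ (F z).im) :
    OperatorMonotoneOn 𝔸 f (Ioo (c - ρ) (c + ρ)) := by
  have hF' := hF.comp_const_add_mul c hρ (mapsTo_const_add_mul_Ioo c hρ)
  have hpos' (z : ℂ) (hz : 0 < z.im) : 0 ≤ (F (c + ρ * z)).im :=
    hpos _ (by simpa using mul_pos hρ hz)
  have h := hF'.operatorMonotoneOn_Ioo_neg_one_one (𝔸 := 𝔸) hpos'
  have hmaps : MapsTo (fun x ↦ -(c / ρ) + ρ⁻¹ * x) (Ioo (c - ρ) (c + ρ)) (Ioo (-1) 1) := by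
    intro x hx
    suffices (x - c) / ρ ∈ Ioo (-1) 1 by convert this using 1; ring
    exact ⟨by rw [lt_div_iff₀ hρ]; linarith [hx.1], by rw [div_lt_iff₀ hρ]; linarith [hx.2]⟩
  refine (h.comp_const_add_mul hF'.continuousOn_real _ (by positivity) hmaps).congr fun x _ ↦ ?_
  dsimp only
  congr 1
  field_simp
  ring

theorem operatorMonotoneOn (hS : IsOpen S) (hS' : S.OrdConnected) (hne : S.Nonempty)
    (hF : IsUpperHalfPlaneExtension F f S) (hpos : ∀ z : ℂ, 0 < z.im → 0 ≤ (F z).im) :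
    OperatorMonotoneOn 𝔸 f S := by
  intro A B hA hB hAS hBS hAB
  obtain ⟨x₀, hx₀⟩ := hne
  have hK : IsCompact (insert x₀ (spectrum ℝ A ∪ spectrum ℝ B)) :=
    ((spectrum.isCompact A).union (spectrum.isCompact B)).insert x₀
  obtain ⟨c, ρ, hρ, hKI, hIS⟩ := exists_Ioo_of_isCompact_subset_isOpen hK
    (insert_nonempty _ _) (insert_subset hx₀ (union_subset hAS hBS)) hS hS'
  have hspec := (subset_insert _ _).trans hKI
  exact (hF.mono hIS).operatorMonotoneOn_Ioo hρ hpos hA hB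
    (subset_union_left.trans hspec) (subset_union_right.trans hspec) hAB

end

theorem im_nonneg_of_Ioo_neg_one_one (hinf : ¬ FiniteDimensional ℂ H)
    (hF : IsUpperHalfPlaneExtension F f (Ioo (-1) 1))
    (hf : OperatorMonotoneOn (H →L[ℂ] H) f (Ioo (-1) 1)) :
    ∀ z : ℂ, 0 < z.im → 0 ≤ (F z).im := by
  have hre : OperatorMonotoneOn (H →L[ℂ] H) (fun y ↦ (diskPullback F (slitToDisk y)).re)
      (Ioo (-1) 1) :=
    hf.congr fun y hy ↦ by rw [hF.diskPullback_slitToDisk hy, Complex.ofReal_re]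
  intro w hw
  obtain ⟨z, hz, hz0, rfl⟩ := exists_diskToSlit_eq hw
  rw [← diskPullback_of_im_nonneg F hz0.le]
  exact hre.im_nonneg_of_mem_ball hinf hF.differentiableOn_diskPullback
    (fun _ ↦ hF.diskPullback_conj) z (mem_ball_zero_iff.2 hz) hz0.le

theorem im_nonneg (hinf : ¬ FiniteDimensional ℂ H) (hS : IsOpen S) (hne : S.Nonempty)
    (hF : IsUpperHalfPlaneExtension F f S) (hf : OperatorMonotoneOn (H →L[ℂ] H) f S) :
    ∀ z : ℂ, 0 < z.im → 0 ≤ (F z).im := by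
  obtain ⟨c, hc⟩ := hne
  obtain ⟨ρ, hρ, hρS⟩ := Metric.isOpen_iff.1 hS c hc
  rw [Real.ball_eq_Ioo] at hρS
  have hmaps := (mapsTo_const_add_mul_Ioo c hρ).mono_right hρS
  have h := (hF.comp_const_add_mul c hρ hmaps).im_nonneg_of_Ioo_neg_one_one hinf
    (hf.comp_const_add_mul hF.continuousOn_real c hρ.le hmaps)
  intro z hz
  have hz' : 0 < ((z - c) / ρ).im := by
    rw [Complex.div_ofReal_im, Complex.sub_im, Complex.ofReal_im, sub_zero]
    exact div_pos hz hρ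
  simpa only [mul_div_cancel₀ _ (Complex.ofReal_ne_zero.2 hρ.ne'), add_sub_cancel] using h _ hz'

end IsUpperHalfPlaneExtension
end Extension

theorem operatorMonotoneOn_iff_spectrum_complex {f : ℝ → ℝ} {S : Set ℝ} :
    OperatorMonotoneOn (H →L[ℂ] H) f S ↔ ∀ A B : H →L[ℂ] H, IsSelfAdjoint A → IsSelfAdjoint B →
      spectrum ℂ A ⊆ (fun x : ℝ ↦ (x : ℂ)) '' S → spectrum ℂ B ⊆ (fun x : ℝ ↦ (x : ℂ)) '' S →
      (B - A).IsPositive → (cfc f B - cfc f A).IsPositive := by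
  have hspec {A : H →L[ℂ] H} (hA : IsSelfAdjoint A) :
      spectrum ℂ A ⊆ (fun x : ℝ ↦ (x : ℂ)) '' S ↔ spectrum ℝ A ⊆ S := by
    rw [← hA.spectrumRestricts.algebraMap_image]
    exact image_subset_image_iff Complex.ofReal_injective
  simp only [← ContinuousLinearMap.le_def]
  exact forall₄_congr fun A B hA hB ↦ by rw [hspec hA, hspec hB]

theorem stmt12_general (hinf : ¬ FiniteDimensional ℂ H) {F : ℂ → ℂ} {f : ℝ → ℝ} {S : Set ℝ}
    (hS : IsOpen S) (hS' : S.OrdConnected) (hne : S.Nonempty)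
    (hF : IsUpperHalfPlaneExtension F f S) :
    OperatorMonotoneOn (H →L[ℂ] H) f S ↔ ∀ z : ℂ, 0 < z.im → 0 ≤ (F z).im :=
  ⟨hF.im_nonneg hinf hS hne, hF.operatorMonotoneOn hS hS' hne⟩

/-- L\"owner's theorem, operator form: a continuous real function on `(a, b)`
(`−∞ ≤ a < b ≤ ∞`) admitting a continuous extension `F` to the closed upper half-plane side
`{Im z > 0} ∪ (a, b)` that is analytic on `{Im z > 0}`, is operator monotone on `(a, b)` if and
only if `Im F(z) ≥ 0` on the open upper half-plane. -/
theorem stmt12 [TopologicalSpace.SeparableSpace H] (hinf : ¬ FiniteDimensional ℂ H)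
    (a b : EReal) (hab : a < b) (f : ℝ → ℝ) (F : ℂ → ℂ) (S : Set ℝ)
    (hS : S = {x : ℝ | a < (x : EReal) ∧ (x : EReal) < b})
    (hf : ContinuousOn f S)
    (hFcont : ContinuousOn F ({z : ℂ | 0 < z.im} ∪ ((fun x : ℝ => (x : ℂ)) '' S)))
    (hFan : DifferentiableOn ℂ F {z : ℂ | 0 < z.im})
    (hFf : ∀ x ∈ S, F (x : ℂ) = ((f x : ℝ) : ℂ)) :
    (∀ A B : H →L[ℂ] H, IsSelfAdjoint A → IsSelfAdjoint B →
        spectrum ℂ A ⊆ (fun x : ℝ => (x : ℂ)) '' S →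
        spectrum ℂ B ⊆ (fun x : ℝ => (x : ℂ)) '' S →
        (B - A).IsPositive → (cfc f B - cfc f A).IsPositive)
      ↔ (∀ z : ℂ, 0 < z.im → 0 ≤ (F z).im) := by
  subst hS
  obtain ⟨x, hx⟩ := EReal.lt_iff_exists_real_btwn.1 hab
  exact operatorMonotoneOn_iff_spectrum_complex.symm.trans <|
    stmt12_general hinf (isOpen_Ioo.preimage continuous_coe_real_ereal)
      (ordConnected_Ioo.preimage_mono EReal.coe_strictMono.monotone) ⟨x, hx⟩ ⟨hFcont, hFan, hFf⟩
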